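/- Let D ≥ 3 be an integer and λ = (D−2)/2. Let Ḡ be a finite simple graph with vertex set V̄, |V̄| ≥ 4, and edge weights ν : E(Ḡ) → (0, ∞) such that every vertex v satisfies Σ_{e ∋ v} ν_e = D/λ. Assume Ḡ is primitive: for every partition V̄ = V₁ ⊔ V₂ with |V₁| ≥ 2 and |V₂| ≥ 2 one has Σ_{e ∈ E(V₁, V₂)} ν_e > D/λ. For pairwise distinct vertices v, a, b ∈ V̄ and a unit vector e ∈ ℝ^D, define P(v, a, b, e) = ∫_{(ℝ^D)^{V̄∖{v,a,b}}} ∏_{{u,w} ∈ E(Ḡ), v ∉ {u,w}} ‖x_u − x_w‖^{−2λν_{uw}} ∏_{u ∈ V̄∖{v,a,b}} (dx_u/π^{D/2}), where x_a = 0 and x_b = e. Then for every such choice the integrand is Lebesgue integrable, and P(v, a, b, e) takes one and the same finite value for all choices of pairwise distinct v, a, b ∈ V̄ and all unit vectors e ∈ ℝ^D. -/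

import Mathlib

open MeasureTheory

/-!
The period is invariant under conformal maps. A similarity carrying `0, e` to the points at which
`a` and `b` sit multiplies the integral by a power of their distance, so `a` and `b` may be
exchanged and `e` rotated. The inversion at the position of `a` distributes the missing
propagators at `v` over the other vertices, so the degree condition makes it exchange `v` and `a`.
Finally, letting `b` range over a dyadic shell multiplies the period by a constant, while scale
invariance allows the condition on `b` to be replaced by the same condition on any other vertex.
These moves connect all triples `(v, a, b)`.

For finiteness, build a shortest spanning tree by Prim's algorithm. Primitivity, made uniform
because there are finitely many cuts, bounds the integrand by a product over the tree edges of an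
integrable function of the edge vector, and this product is integrated leaf by leaf.
-/

namespace FeynmanPeriod

open Finset Function
open scoped ENNReal

section Marginal

variable {ι α : Type*} [DecidableEq ι]

theorem injOn_of_separated {A S : Finset ι} {x z : ι → α} (hx : Set.InjOn x (A \ S : Finset ι))
    (hzx : ∀ u ∉ S, z u = x u) (hsep : ∀ u ∈ S, ∀ w, w ≠ u → z u ≠ z w) : Set.InjOn z A := by
  intro u hu w hw huw
  by_contra hne
  have huS : u ∉ S := fun h => hsep u h w (Ne.symm hne) huw
  have hwS : w ∉ S := fun h => hsep w h u hne huw.symm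
  rw [hzx u huS, hzx w hwS] at huw
  exact hne (hx (mem_sdiff.2 ⟨hu, huS⟩) (mem_sdiff.2 ⟨hw, hwS⟩) huw)

variable [MeasurableSpace α]

theorem lmarginal_mono_of_eq_off {μ : ι → Measure α} {S : Finset ι} {f g : (ι → α) → ℝ≥0∞}
    {x : ι → α} (h : ∀ z, (∀ u ∉ S, z u = x u) → f z ≤ g z) :
    lmarginal μ S f x ≤ lmarginal μ S g x :=
  lintegral_mono fun _ => h _ fun _ hu => dif_neg hu

theorem lmarginal_congr_of_eq_off {μ : ι → Measure α} {S : Finset ι} {f g : (ι → α) → ℝ≥0∞}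
    {x : ι → α} (h : ∀ z, (∀ u ∉ S, z u = x u) → f z = g z) :
    lmarginal μ S f x = lmarginal μ S g x :=
  (lmarginal_mono_of_eq_off fun z hz => (h z hz).le).antisymm
    (lmarginal_mono_of_eq_off fun z hz => (h z hz).ge)

theorem lmarginal_mul_of_eq_off {μ : ι → Measure α} {S : Finset ι}
    {f g : (ι → α) → ℝ≥0∞} (hf : Measurable f) {x : ι → α}
    (hg : ∀ z, (∀ u ∉ S, z u = x u) → g z = g x) :
    lmarginal μ S (fun z => f z * g z) x = lmarginal μ S f x * g x := by
  rw [lmarginal_congr_of_eq_off (g := fun z => f z * g x) fun z hz => by rw [hg z hz]]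
  exact lintegral_mul_const _ (hf.comp measurable_updateFinset)

theorem lmarginal_comp_of_change_of_variables {μ : Measure α} [SigmaFinite μ] {T : α → α}
    {J : α → ℝ≥0∞} (hT : Measurable T) (hJ : Measurable J)
    (hTJ : ∀ f : α → ℝ≥0∞, Measurable f → ∫⁻ z, f z ∂μ = ∫⁻ z, f (T z) * J z ∂μ)
    (S : Finset ι) {f : (ι → α) → ℝ≥0∞} (hf : Measurable f) (x : ι → α) :
    lmarginal (fun _ => μ) S f (T ∘ x) =
      lmarginal (fun _ => μ) S (fun z => f (T ∘ z) * ∏ u ∈ S, J (z u)) x := by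
  have hcomp : Measurable fun z : ι → α => f (T ∘ z) :=
    hf.comp (measurable_pi_lambda _ fun u => hT.comp (measurable_pi_apply u))
  have hprod (S : Finset ι) : Measurable fun z : ι → α => f (T ∘ z) * ∏ u ∈ S, J (z u) :=
    hcomp.mul (Finset.measurable_prod _ fun u _ => hJ.comp (measurable_pi_apply u))
  induction S using Finset.induction_on generalizing x with
  | empty => simp
  | insert u S hu ih =>
    rw [lmarginal_insert _ hf hu, lmarginal_insert _ (hprod _) hu,
      hTJ (fun z => lmarginal (fun _ => μ) S f (update (T ∘ x) u z))
        ((hf.lmarginal _).comp (measurable_update _))]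
    refine lintegral_congr fun z => ?_
    have hfactor : lmarginal (fun _ => μ) S (fun z => f (T ∘ z) * ∏ w ∈ insert u S, J (z w))
        (update x u z) = lmarginal (fun _ => μ) S (fun z => f (T ∘ z) * ∏ w ∈ S, J (z w))
          (update x u z) * J z := by
      simp only [prod_insert hu, mul_comm (J _), ← mul_assoc]
      rw [lmarginal_mul_of_eq_off (hprod S) fun z hz => congrArg J (hz u hu), update_self]
    rw [hfactor, ← ih, comp_update]

theorem lmarginal_eq_lintegral_subtype {μ : Measure α} [SigmaFinite μ] {p : ι → Prop}
    [DecidablePred p] [Fintype {u // p u}] {S : Finset ι} (hS : ∀ u, u ∈ S ↔ p u)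
    (f : (ι → α) → ℝ≥0∞) (x : ι → α) :
    lmarginal (fun _ => μ) S f x =
      ∫⁻ y : {u // p u} → α, f (fun u => if h : p u then y ⟨u, h⟩ else x u)
        ∂Measure.pi fun _ => μ := by
  let e : S ≃ {u // p u} := Equiv.subtypeEquivRight hS
  rw [← (measurePreserving_piCongrLeft (fun _ => μ) e).lintegral_comp_emb
    (MeasurableEquiv.measurableEmbedding _)]
  refine lintegral_congr fun y => congrArg f (funext fun u => ?_)
  by_cases hu : p u
  · rw [dif_pos hu]
    exact (dif_pos ((hS u).2 hu)).trans
      (MeasurableEquiv.piCongrLeft_apply_apply e (β := fun _ => α) y ⟨u, (hS u).2 hu⟩).symm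
  · rw [dif_neg hu]
    exact dif_neg (mt (hS u).1 hu)

theorem ae_updateFinset_ne [MeasurableEq α] {μ : Measure α} [SigmaFinite μ]
    [NullSingletonClass μ] {S : Finset ι} {u w : ι} (hu : u ∈ S) (hwu : w ≠ u) (x : ι → α) :
    ∀ᵐ y ∂Measure.pi fun _ : S => μ, updateFinset x S y u ≠ updateFinset x S y w := by
  let diag : Set (ι → α) := {z | z u = z w}
  have hdiag : MeasurableSet diag :=
    measurableSet_eq_fun (measurable_pi_apply u) (measurable_pi_apply w)
  have hzero : lmarginal (fun _ => μ) S (diag.indicator 1) x = 0 := by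
    rw [lmarginal_erase' _ (measurable_one.indicator hdiag) hu]
    have hsection (z : ι → α) : ∫⁻ t, diag.indicator 1 (update z u t) ∂μ = 0 := by
      have hpreimage : update z u ⁻¹' diag = {z w} := by
        ext t
        simp [diag, hwu]
      calc ∫⁻ t, diag.indicator 1 (update z u t) ∂μ = μ (update z u ⁻¹' diag) :=
            lintegral_indicator_one (measurable_update z hdiag)
        _ = 0 := by rw [hpreimage, measure_singleton]
    simp only [hsection, lmarginal, lintegral_zero]
  have hmeas : MeasurableSet (updateFinset x S ⁻¹' diag) := measurable_updateFinset hdiag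
  simpa [ae_iff, diag] using (lintegral_indicator_one hmeas).symm.trans hzero

theorem lmarginal_mono_of_separated [Countable ι] [MeasurableEq α] {μ : Measure α}
    [SigmaFinite μ] [NullSingletonClass μ] {S : Finset ι} {f g : (ι → α) → ℝ≥0∞} {x : ι → α}
    (h : ∀ z, (∀ u ∉ S, z u = x u) → (∀ u ∈ S, ∀ w, w ≠ u → z u ≠ z w) → f z ≤ g z) :
    lmarginal (fun _ => μ) S f x ≤ lmarginal (fun _ => μ) S g x := by
  have hsep : ∀ᵐ y ∂Measure.pi fun _ : S => μ, ∀ u ∈ S, ∀ w, w ≠ u →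
      updateFinset x S y u ≠ updateFinset x S y w := by
    simp only [Filter.eventually_all, ae_all_iff]
    exact fun u hu w hwu => ae_updateFinset_ne hu hwu x
  exact lintegral_mono_ae (hsep.mono fun y hy => h _ (fun _ hu => dif_neg hu) hy)

theorem lmarginal_congr_of_separated [Countable ι] [MeasurableEq α] {μ : Measure α}
    [SigmaFinite μ] [NullSingletonClass μ] {S : Finset ι} {f g : (ι → α) → ℝ≥0∞} {x : ι → α}
    (h : ∀ z, (∀ u ∉ S, z u = x u) → (∀ u ∈ S, ∀ w, w ≠ u → z u ≠ z w) → f z = g z) :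
    lmarginal (fun _ => μ) S f x = lmarginal (fun _ => μ) S g x :=
  (lmarginal_mono_of_separated fun z hz hsep => (h z hz hsep).le).antisymm
    (lmarginal_mono_of_separated fun z hz hsep => (h z hz hsep).ge)

/-- Integrating out the leaves of a forest one after another. -/
theorem lmarginal_prod_sub_parent [AddGroup α] [MeasurableAdd₂ α] [MeasurableSub₂ α] {μ : Measure α}
    [SigmaFinite μ] [μ.IsAddRightInvariant] {g : α → ℝ≥0∞} (hg : Measurable g)
    {parent : ι → ι} {rank : ι → ℕ} {S : Finset ι} (hrank : ∀ u ∈ S, rank (parent u) < rank u)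
    (x : ι → α) :
    lmarginal (fun _ => μ) S (fun z => ∏ u ∈ S, g (z u - z (parent u))) x =
      (∫⁻ z, g z ∂μ) ^ S.card := by
  have hmeas (S : Finset ι) : Measurable fun z : ι → α => ∏ u ∈ S, g (z u - z (parent u)) :=
    Finset.measurable_prod _ fun u _ =>
      hg.comp ((measurable_pi_apply u).sub (measurable_pi_apply (parent u)))
  induction S using Finset.induction_on_max_value rank with
  | empty => simp
  | insert u S hu hmax ih =>
    have hparent {w : ι} (hw : w ∈ insert u S) : parent w ≠ u := by
      rintro rfl
      have := hrank w hw
      rcases mem_insert.1 hw with h | h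
      · rw [← h] at this; exact this.false
      · exact this.not_ge (hmax w h)
    have hleaf (z : ι → α) :
        ∫⁻ t, ∏ w ∈ insert u S, g (update z u t w - update z u t (parent w)) ∂μ =
          (∫⁻ t, g t ∂μ) * ∏ w ∈ S, g (z w - z (parent w)) := by
      have hrest (t : α) : ∏ w ∈ S, g (update z u t w - update z u t (parent w)) =
          ∏ w ∈ S, g (z w - z (parent w)) := prod_congr rfl fun w hw => by
        rw [update_of_ne (ne_of_mem_of_not_mem hw hu),
          update_of_ne (hparent (mem_insert_of_mem hw))]
      simp only [prod_insert hu, hrest, update_self, update_of_ne (hparent (mem_insert_self u S))]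
      rw [lintegral_mul_const _ (by fun_prop), lintegral_sub_right_eq_self]
    rw [lmarginal_insert' _ (hmeas _) hu]
    simp only [hleaf, mul_comm (∫⁻ t, g t ∂μ)]
    rw [lmarginal_mul_of_eq_off (hmeas S) fun _ _ => rfl, card_insert_of_notMem hu, pow_succ,
      ih fun w hw => hrank w (mem_insert_of_mem hw)]

theorem lmarginal_sum_prod_sub_parent_lt_top [AddGroup α] [MeasurableAdd₂ α] [MeasurableSub₂ α]
    {μ : Measure α} [SigmaFinite μ] [μ.IsAddRightInvariant] {g : α → ℝ≥0∞} (hg : Measurable g)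
    (hg_lt_top : ∫⁻ z, g z ∂μ < ⊤) {C : ℝ≥0∞} (hC : C ≠ ⊤) {S : Finset ι}
    {forests : Finset (ι → ι)}
    (hforests : ∀ p ∈ forests, ∃ rank : ι → ℕ, ∀ u ∈ S, rank (p u) < rank u) (x : ι → α) :
    lmarginal (fun _ => μ) S (fun z => ∑ p ∈ forests, C * ∏ u ∈ S, g (z u - z (p u))) x < ⊤ := by
  have hmeas (p : ι → ι) : Measurable fun z : ι → α => ∏ u ∈ S, g (z u - z (p u)) :=
    Finset.measurable_prod _ fun u _ =>
      hg.comp ((measurable_pi_apply u).sub (measurable_pi_apply (p u)))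
  calc lmarginal (fun _ => μ) S (fun z => ∑ p ∈ forests, C * ∏ u ∈ S, g (z u - z (p u))) x
      = ∑ p ∈ forests, C * lmarginal (fun _ => μ) S (fun z => ∏ u ∈ S, g (z u - z (p u))) x := by
        refine (lintegral_finsetSum _ fun p _ =>
          ((hmeas p).const_mul C).comp measurable_updateFinset).trans ?_
        exact sum_congr rfl fun p _ =>
          lintegral_const_mul _ ((hmeas p).comp measurable_updateFinset)
    _ < ⊤ := ENNReal.sum_lt_top.2 fun p hp => by
        obtain ⟨rank, hrank⟩ := hforests p hp
        rw [lmarginal_prod_sub_parent hg hrank]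
        exact ENNReal.mul_lt_top hC.lt_top (ENNReal.pow_lt_top hg_lt_top)

end Marginal

section WeightedIntervals

theorem sum_Ico_sq_split (f : ℕ → ℕ → ℝ) {p k q : ℕ} (hpk : p ≤ k) (hkq : k ≤ q) :
    ∑ i ∈ Ico p q, ∑ j ∈ Ico p q, f i j =
      ∑ i ∈ Ico p k, ∑ j ∈ Ico p k, f i j + ∑ i ∈ Ico k q, ∑ j ∈ Ico k q, f i j +
        ∑ i ∈ Ico p k, ∑ j ∈ Ico k q, (f i j + f j i) := by
  simp only [sum_add_distrib, sum_comm (s := Ico p k) (t := Ico k q) (f := fun i j => f j i),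
    ← sum_Ico_consecutive _ hpk hkq]
  ring

variable {s T : ℕ → ℕ → ℝ} {L c : ℕ → ℝ} {N : ℕ}

/-- Induction on the length: cut the interval where `L` is largest; by `hT`, a pair separated by the
cut contributes nonpositively to the left-hand side. -/
theorem sum_Ico_sq_mul_sub_le (hs : ∀ i j, 0 ≤ s i j)
    (hT : ∀ i k j, i < k → k ≤ j → j < N → L k ≤ T i j ∧ L k ≤ T j i)
    (hc : ∀ p q, p < q → q ≤ N →
      ∑ i ∈ Ico p q, ∑ j ∈ Ico p q, s i j ≤ ∑ k ∈ Ico (p + 1) q, c k)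
    {p q : ℕ} (hpq : p < q) (hq : q ≤ N) {M : ℝ} (hM : ∀ k ∈ Ico (p + 1) q, L k ≤ M) :
    ∑ i ∈ Ico p q, ∑ j ∈ Ico p q, s i j * (M - T i j) ≤
      ∑ k ∈ Ico (p + 1) q, c k * (M - L k) := by
  induction h : q - p using Nat.strong_induction_on generalizing p q M with
  | _ n ih =>
  subst h
  obtain rfl | hlong : q = p + 1 ∨ p + 1 < q := by omega
  · have hpp : s p p = 0 := le_antisymm (by simpa using hc p (p + 1) hpq hq) (hs p p)
    simp [hpp]
  obtain ⟨m, hm, hmax⟩ := exists_max_image (Ico (p + 1) q) L ⟨p + 1, by simp [hlong]⟩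
  obtain ⟨hpm, hmq⟩ : p < m ∧ m < q := by simpa [Nat.succ_le_iff] using hm
  have hleft := ih (m - p) (by omega) hpm (hmq.le.trans hq)
    (M := L m) (fun k hk => hmax k (Ico_subset_Ico_right hmq.le hk)) rfl
  have hright := ih (q - m) (by omega) hmq hq
    (M := L m) (fun k hk => hmax k (Ico_subset_Ico_left (by omega) hk)) rfl
  have hcross : ∑ i ∈ Ico p m, ∑ j ∈ Ico m q,
      (s i j * (L m - T i j) + s j i * (L m - T j i)) ≤ 0 := by
    refine sum_nonpos fun i hi => sum_nonpos fun j hj => ?_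
    obtain ⟨hij, hji⟩ := hT i m j (mem_Ico.1 hi).2 (mem_Ico.1 hj).1 ((mem_Ico.1 hj).2.trans_le hq)
    exact add_nonpos (mul_nonpos_of_nonneg_of_nonpos (hs i j) (sub_nonpos.2 hij))
      (mul_nonpos_of_nonneg_of_nonpos (hs j i) (sub_nonpos.2 hji))
  have hcut : ∑ k ∈ Ico (p + 1) q, c k * (L m - L k) =
      ∑ k ∈ Ico (p + 1) m, c k * (L m - L k) + ∑ k ∈ Ico (m + 1) q, c k * (L m - L k) := by
    rw [← sum_Ico_consecutive _ (Nat.succ_le_of_lt hpm) hmq.le, sum_eq_sum_Ico_succ_bot hmq,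
      sub_self, mul_zero, zero_add]
  have hweight := mul_le_mul_of_nonneg_right (hc p q hpq hq) (sub_nonneg.2 (hM m hm))
  calc ∑ i ∈ Ico p q, ∑ j ∈ Ico p q, s i j * (M - T i j)
      = (∑ i ∈ Ico p q, ∑ j ∈ Ico p q, s i j) * (M - L m) +
          ∑ i ∈ Ico p q, ∑ j ∈ Ico p q, s i j * (L m - T i j) := by
        simp only [sum_mul, ← sum_add_distrib]
        exact sum_congr rfl fun i _ => sum_congr rfl fun j _ => by ring
    _ ≤ (∑ k ∈ Ico (p + 1) q, c k) * (M - L m) + ∑ k ∈ Ico (p + 1) q, c k * (L m - L k) := by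
        rw [sum_Ico_sq_split (fun i j => s i j * (L m - T i j)) hpm.le hmq.le, hcut]
        linarith
    _ = ∑ k ∈ Ico (p + 1) q, c k * (M - L k) := by
        simp only [sum_mul, ← sum_add_distrib]
        exact sum_congr rfl fun k _ => by ring

theorem sum_mul_le_sum_Ico_sq_mul (hN : 0 < N) (hs : ∀ i j, 0 ≤ s i j)
    (hT : ∀ i k j, i < k → k ≤ j → j < N → L k ≤ T i j ∧ L k ≤ T j i)
    (hc : ∀ p q, p < q → q ≤ N →
      ∑ i ∈ Ico p q, ∑ j ∈ Ico p q, s i j ≤ ∑ k ∈ Ico (p + 1) q, c k)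
    (htotal : ∑ i ∈ Ico 0 N, ∑ j ∈ Ico 0 N, s i j = ∑ k ∈ Ico 1 N, c k) :
    ∑ k ∈ Ico 1 N, c k * L k ≤ ∑ i ∈ Ico 0 N, ∑ j ∈ Ico 0 N, s i j * T i j := by
  obtain ⟨M, hM⟩ := ((Ico 1 N).image L).bddAbove
  have h := sum_Ico_sq_mul_sub_le hs hT hc hN le_rfl (M := M) fun k hk =>
    hM (mem_image_of_mem L hk)
  simp only [mul_sub, sum_sub_distrib, ← sum_mul, htotal, zero_add] at h
  linarith

theorem sum_add_abs_sub_le_sum_Ico_sq_mul {d ε : ℝ} (hs : ∀ i j, 0 ≤ s i j) (hdiag : ∀ i, s i i = 0)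
    (hT : ∀ i k j, i < k → k ≤ j → j < N → L k ≤ T i j ∧ L k ≤ T j i)
    (hgap : ∀ p q, p + 1 < q → q ≤ N → (0 < p ∨ q < N) →
      ∑ i ∈ Ico p q, ∑ j ∈ Ico p q, s i j ≤ d * (q - p - 1 : ℝ) - ε)
    (htotal : ∑ i ∈ Ico 0 N, ∑ j ∈ Ico 0 N, s i j = d * (N - 1 : ℝ)) (hε : 0 ≤ ε)
    {k f : ℕ} (hk : k ∈ Ico 1 N) (hf : f ∈ Ico 1 N) :
    d * ∑ j ∈ Ico 1 N, L j + ε * |L k - L f| ≤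
      ∑ i ∈ Ico 0 N, ∑ j ∈ Ico 0 N, s i j * T i j := by
  suffices horiented : ∀ {k f : ℕ}, k ∈ Ico 1 N → f ∈ Ico 1 N →
      d * ∑ j ∈ Ico 1 N, L j + ε * (L k - L f) ≤
        ∑ i ∈ Ico 0 N, ∑ j ∈ Ico 0 N, s i j * T i j by
    rcases abs_choice (L k - L f) with h | h <;> rw [h]
    · exact horiented hk hf
    · rw [neg_sub]
      exact horiented hf hk
  clear hk hf k f
  intro k f hk hf
  have hN : 0 < N := by simp only [mem_Ico] at hk; omega
  let c : ℕ → ℝ := fun j => d + ε * ((if k = j then 1 else 0) - if f = j then 1 else 0)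
  have hsum (p q : ℕ) (hpq : p < q) : ∑ j ∈ Ico (p + 1) q, c j = d * (q - p - 1 : ℝ) +
      ε * ((if k ∈ Ico (p + 1) q then 1 else 0) - if f ∈ Ico (p + 1) q then 1 else 0) := by
    simp only [c, sum_add_distrib, ← mul_sum, sum_sub_distrib, sum_ite_eq, sum_const, Nat.card_Ico,
      nsmul_eq_mul, Nat.cast_sub (Nat.succ_le_of_lt hpq)]
    push_cast
    ring
  have htotal_c : ∑ i ∈ Ico 0 N, ∑ j ∈ Ico 0 N, s i j = ∑ j ∈ Ico 1 N, c j := by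
    rw [htotal, ← zero_add 1, hsum 0 N hN]
    simp [hk, hf]
  have hle (p q : ℕ) (hpq : p < q) (hq : q ≤ N) :
      ∑ i ∈ Ico p q, ∑ j ∈ Ico p q, s i j ≤ ∑ j ∈ Ico (p + 1) q, c j := by
    obtain rfl | hlong : q = p + 1 ∨ p + 1 < q := by omega
    · simp [hdiag]
    by_cases hproper : 0 < p ∨ q < N
    · refine (hgap p q hlong hq hproper).trans ?_
      rw [hsum p q hpq]
      split_ifs <;> linarith
    · obtain ⟨rfl, rfl⟩ : p = 0 ∧ q = N := by omega
      exact htotal_c.le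
  calc d * ∑ j ∈ Ico 1 N, L j + ε * (L k - L f) = ∑ j ∈ Ico 1 N, c j * L j := by
        simp only [c, add_mul, mul_assoc, sub_mul, ite_mul, one_mul, zero_mul, sum_add_distrib,
          ← mul_sum, sum_sub_distrib, sum_ite_eq, hk, hf, if_true]
    _ ≤ _ := sum_mul_le_sum_Ico_sq_mul hN hs hT hle htotal_c

end WeightedIntervals

section PrimOrder

variable {V : Type*} [DecidableEq V]

/-- The first `n` steps of Prim's algorithm on the finite set `U` with edge lengths `dst`: the
vertices `σ 0, …, σ (n - 1)` are visited in this order, and `σ k` is attached to the earlier vertex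
`σ (q k)` by a shortest edge between a visited and an unvisited vertex. -/
structure IsPrimPrefix (dst : V → V → ℝ) (U : Finset V) (n : ℕ) (σ : ℕ → V) (q : ℕ → ℕ) :
    Prop where
  mem : ∀ i < n, σ i ∈ U
  injOn : Set.InjOn σ (range n)
  parent_lt : ∀ k, 0 < k → k < n → q k < k
  parent_le : ∀ k, 0 < k → k < n → ∀ i < k, ∀ w ∈ U, w ∉ (range k).image σ →
    dst (σ k) (σ (q k)) ≤ dst w (σ i)

namespace IsPrimPrefix

variable {dst : V → V → ℝ} {U : Finset V} {n : ℕ} {σ : ℕ → V} {q : ℕ → ℕ}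

theorem image_subset (h : IsPrimPrefix dst U n σ q) : (range n).image σ ⊆ U :=
  image_subset_iff.2 fun i hi => h.mem i (mem_range.1 hi)

theorem card_image (h : IsPrimPrefix dst U n σ q) : #((range n).image σ) = n := by
  rw [card_image_of_injOn h.injOn, card_range]

theorem exists_update (h : IsPrimPrefix dst U n σ q) (hn : 0 < n) (hnU : n < #U) :
    ∃ w i, IsPrimPrefix dst U (n + 1) (update σ n w) (update q n i) := by
  obtain ⟨w₀, hw₀⟩ : (U \ (range n).image σ).Nonempty := by
    rw [← card_pos, card_sdiff_of_subset h.image_subset, h.card_image]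
    omega
  obtain ⟨⟨w, i⟩, hwi, hmin⟩ := exists_min_image ((U \ (range n).image σ) ×ˢ range n)
    (fun e => dst e.1 (σ e.2)) ⟨(w₀, 0), mk_mem_product hw₀ (mem_range.2 hn)⟩
  obtain ⟨hw, hi⟩ := mem_product.1 hwi
  obtain ⟨hwU, hw_new⟩ := mem_sdiff.1 hw
  have hσ {j : ℕ} (hj : j < n) : update σ n w j = σ j := update_of_ne hj.ne _ _
  have himage {k : ℕ} (hk : k ≤ n) : (range k).image (update σ n w) = (range k).image σ :=
    image_congr fun j hj => hσ ((mem_range.1 hj).trans_le hk)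
  refine ⟨w, i, fun j hj => ?_, ?_, fun k hk hkn => ?_, fun k hk hkn j hjk u hu hu_new => ?_⟩
  · rcases Nat.lt_succ_iff_lt_or_eq.1 hj with hj | rfl
    · exact hσ hj ▸ h.mem j hj
    · rwa [update_self]
  · rw [range_add_one, coe_insert, Set.injOn_insert (by simp)]
    refine ⟨h.injOn.congr fun j hj => (hσ (mem_range.1 hj)).symm, ?_⟩
    rwa [update_self, ← coe_image, himage le_rfl, mem_coe]
  · rcases Nat.lt_succ_iff_lt_or_eq.1 hkn with hkn | rfl
    · rw [update_of_ne hkn.ne]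
      exact h.parent_lt k hk hkn
    · rw [update_self]
      exact mem_range.1 hi
  · rw [himage (Nat.lt_succ_iff.1 hkn)] at hu_new
    rcases Nat.lt_succ_iff_lt_or_eq.1 hkn with hkn | rfl
    · rw [hσ hkn, hσ (hjk.trans hkn), update_of_ne hkn.ne, hσ ((h.parent_lt k hk hkn).trans hkn)]
      exact h.parent_le k hk hkn j hjk u hu hu_new
    · rw [update_self, update_self, hσ hjk, hσ (mem_range.1 hi)]
      exact hmin (u, j) (mk_mem_product (mem_sdiff.2 ⟨hu, hu_new⟩) (mem_range.2 hjk))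

theorem exists_of_mem (dst : V → V → ℝ) {U : Finset V} {a : V} (ha : a ∈ U) :
    ∃ σ q, σ 0 = a ∧ IsPrimPrefix dst U #U σ q := by
  suffices h : ∀ n, 1 ≤ n → n ≤ #U → ∃ σ q, σ 0 = a ∧ IsPrimPrefix dst U n σ q from
    h _ (card_pos.2 ⟨a, ha⟩) le_rfl
  intro n hn
  induction n, hn using Nat.le_induction with
  | base =>
    exact fun _ => ⟨fun _ => a, id, rfl, fun _ _ => ha, by simp, fun _ _ _ => by omega,
      fun _ _ _ => by omega⟩
  | succ n hn ih =>
    intro hnU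
    obtain ⟨σ, q, hσ, h⟩ := ih (by omega)
    obtain ⟨w, i, h'⟩ := h.exists_update hn hnU
    exact ⟨_, _, by rwa [update_of_ne (by omega)], h'⟩

theorem image_eq (h : IsPrimPrefix dst U #U σ q) : (range #U).image σ = U :=
  eq_of_subset_of_card_le h.image_subset h.card_image.ge

theorem image_Ico_one_eq (h : IsPrimPrefix dst U #U σ q) (hU : U.Nonempty) :
    (Ico 1 #U).image σ = U.erase (σ 0) := by
  have hIco : Ico 1 #U = range #U \ {0} := by ext; simp; omega
  rw [hIco, image_sdiff_of_injOn h.injOn (by simpa using hU), h.image_eq, image_singleton,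
    sdiff_singleton_eq_erase]

theorem parent_le_of_le (h : IsPrimPrefix dst U n σ q) {i k j : ℕ} (hik : i < k) (hkj : k ≤ j)
    (hj : j < n) : dst (σ k) (σ (q k)) ≤ dst (σ j) (σ i) := by
  refine h.parent_le k (by omega) (by omega) i hik _ (h.mem j hj) fun hmem => ?_
  obtain ⟨m, hm, hmj⟩ := mem_image.1 hmem
  have := h.injOn (mem_coe.2 (mem_range.2 (by grind))) (mem_coe.2 (mem_range.2 hj)) hmj
  grind

end IsPrimPrefix

end PrimOrder

section ShortestConnections

variable {X : Type*} [PseudoMetricSpace X] {y : ℕ → X} {q : ℕ → ℕ}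

theorem dist_zero_le_mul_of_parent {n : ℕ} {r : ℝ} (hq : ∀ k, 0 < k → k ≤ n → q k < k)
    (hr : ∀ k, 0 < k → k ≤ n → dist (y k) (y (q k)) ≤ r) {k : ℕ} (hk : k ≤ n) :
    dist (y k) (y 0) ≤ k * r := by
  induction k using Nat.strong_induction_on with
  | _ k ih =>
    obtain rfl | hpos := Nat.eq_zero_or_pos k
    · simp
    have hlt := hq k hpos hk
    have hr_nonneg : 0 ≤ r := dist_nonneg.trans (hr k hpos hk)
    calc dist (y k) (y 0) ≤ dist (y k) (y (q k)) + dist (y (q k)) (y 0) := dist_triangle _ _ _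
      _ ≤ r + q k * r := add_le_add (hr k hpos hk) (ih _ hlt (by omega))
      _ = (q k + 1 : ℕ) * r := by push_cast; ring
      _ ≤ k * r := by gcongr; exact hlt

variable {N : ℕ}

theorem exists_abs_log_dist_parent_le (hq : ∀ k, 0 < k → k < N → q k < k)
    (hmin : ∀ i k j, i < k → k ≤ j → j < N → dist (y k) (y (q k)) ≤ dist (y j) (y i))
    {b : ℕ} (hb : b ∈ Ico 1 N) (hb₁ : 1 ≤ dist (y b) (y 0)) (hb₂ : dist (y b) (y 0) ≤ 2) :
    ∃ f ∈ Ico 1 N, |Real.log (dist (y f) (y (q f)))| ≤ Real.log (2 * N) := by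
  obtain ⟨hb0, hbN⟩ := mem_Ico.1 hb
  obtain ⟨f, hf, hmax⟩ := exists_max_image (Icc 1 b) (fun k => dist (y k) (y (q k)))
    ⟨b, mem_Icc.2 ⟨hb0, le_rfl⟩⟩
  obtain ⟨hf0, hfb⟩ := mem_Icc.1 hf
  refine ⟨f, mem_Ico.2 ⟨hf0, hfb.trans_lt hbN⟩, ?_⟩
  set ℓ := dist (y f) (y (q f))
  have hN : (1 : ℝ) ≤ N := by exact_mod_cast hb0.trans hbN.le
  have hupper : ℓ ≤ 2 * N := (hmin 0 f b hf0 hfb hbN).trans (by linarith)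
  have hlower : 1 ≤ N * ℓ := calc
    1 ≤ b * ℓ := hb₁.trans <| dist_zero_le_mul_of_parent (fun k h h' => hq k h (by omega))
        (fun k h h' => hmax k (mem_Icc.2 ⟨h, h'⟩)) le_rfl
    _ ≤ N * ℓ := by gcongr
  have hℓ : 0 < ℓ := pos_of_mul_pos_right (one_pos.trans_le hlower) (by positivity)
  refine abs_le.2 ⟨?_, Real.log_le_log hℓ hupper⟩
  rw [← Real.log_inv]
  refine Real.log_le_log (by positivity) ((inv_le_iff_one_le_mul₀' (by positivity)).2 ?_)
  linarith

theorem mul_sum_log_dist_parent_add_le {s : ℕ → ℕ → ℝ} {d ε : ℝ} (hs : ∀ i j, 0 ≤ s i j)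
    (hdiag : ∀ i, s i i = 0)
    (hgap : ∀ p q, p + 1 < q → q ≤ N → (0 < p ∨ q < N) →
      ∑ i ∈ Ico p q, ∑ j ∈ Ico p q, s i j ≤ d * (q - p - 1 : ℝ) - ε)
    (htotal : ∑ i ∈ Ico 0 N, ∑ j ∈ Ico 0 N, s i j = d * (N - 1 : ℝ)) (hε : 0 ≤ ε)
    (hy : ∀ i < N, ∀ j < N, i ≠ j → 0 < dist (y i) (y j))
    (hq : ∀ k, 0 < k → k < N → q k < k)
    (hmin : ∀ i k j, i < k → k ≤ j → j < N → dist (y k) (y (q k)) ≤ dist (y j) (y i))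
    {b : ℕ} (hb : b ∈ Ico 1 N) (hb₁ : 1 ≤ dist (y b) (y 0)) (hb₂ : dist (y b) (y 0) ≤ 2) :
    d * ∑ k ∈ Ico 1 N, Real.log (dist (y k) (y (q k))) +
        ε / (N - 1) * ∑ k ∈ Ico 1 N, |Real.log (dist (y k) (y (q k)))| - ε * Real.log (2 * N) ≤
      ∑ i ∈ Ico 0 N, ∑ j ∈ Ico 0 N, s i j * Real.log (dist (y i) (y j)) := by
  set L : ℕ → ℝ := fun k => Real.log (dist (y k) (y (q k)))
  obtain ⟨f, hf, hLf⟩ := exists_abs_log_dist_parent_le hq hmin hb hb₁ hb₂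
  have hT (i k j : ℕ) (hik : i < k) (hkj : k ≤ j) (hj : j < N) :
      L k ≤ Real.log (dist (y i) (y j)) ∧ L k ≤ Real.log (dist (y j) (y i)) := by
    have hqk := hq k (by omega) (by omega)
    have hle : L k ≤ Real.log (dist (y j) (y i)) :=
      Real.log_le_log (hy _ (by omega) _ (by omega) hqk.ne') (hmin i k j hik hkj hj)
    exact ⟨by rwa [dist_comm (y i)], hle⟩
  have hN : (0 : ℝ) < N - 1 := by
    have : 1 < N := by simp only [mem_Ico] at hb; omega
    exact sub_pos.2 (by exact_mod_cast this)
  have hk (k : ℕ) (hk : k ∈ Ico 1 N) : ε * |L k| ≤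
      ∑ i ∈ Ico 0 N, ∑ j ∈ Ico 0 N, s i j * Real.log (dist (y i) (y j)) +
        ε * Real.log (2 * N) - d * ∑ j ∈ Ico 1 N, L j := by
    have hcut := sum_add_abs_sub_le_sum_Ico_sq_mul hs hdiag hT hgap htotal hε hk hf
    have htri : |L k| ≤ |L k - L f| + Real.log (2 * N) := by
      linarith [abs_sub_abs_le_abs_sub (L k) (L f)]
    linarith [mul_le_mul_of_nonneg_left htri hε]
  have hsum := sum_le_card_nsmul _ _ _ hk
  have hcard : ((#(Ico 1 N) : ℕ) : ℝ) = N - 1 := by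
    rw [Nat.card_Ico, Nat.cast_sub (by simp only [mem_Ico] at hb; omega), Nat.cast_one]
  rw [← mul_sum, nsmul_eq_mul, hcard] at hsum
  have := (div_le_iff₀' hN).2 hsum
  rw [div_mul_eq_mul_div]
  linarith

end ShortestConnections

section EuclideanIntegrals

open Module

variable {E : Type*} [NormedAddCommGroup E] [InnerProductSpace ℝ E] [FiniteDimensional ℝ E]
  [MeasurableSpace E] [BorelSpace E]

theorem lintegral_eq_lintegral_similarity {r : ℝ} (hr : 0 < r) (c : E) (R : E ≃ₗᵢ[ℝ] E)
    {f : E → ℝ≥0∞} (hf : Measurable f) :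
    ∫⁻ z, f z = ∫⁻ z, f (c + r • R z) * ENNReal.ofReal (r ^ finrank ℝ E) := by
  have hfc : Measurable fun z => f (c + r • z) := by fun_prop
  have hfr : Measurable fun z => f (c + z) := by fun_prop
  have hscale : ENNReal.ofReal (r ^ finrank ℝ E) • Measure.map (r • ·) (volume : Measure E) =
      volume := by
    rw [Measure.map_addHaar_smul _ hr.ne', smul_smul, ← ENNReal.ofReal_mul (by positivity),
      abs_of_nonneg (by positivity), mul_inv_cancel₀ (by positivity), ENNReal.ofReal_one, one_smul]
  calc ∫⁻ z, f z = ∫⁻ z, f (c + z) := (lintegral_add_left_eq_self f c).symm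
    _ = ENNReal.ofReal (r ^ finrank ℝ E) * ∫⁻ z, f (c + r • z) := by
        conv_lhs => rw [← hscale]
        rw [lintegral_smul_measure, lintegral_map hfr (measurable_const_smul r), smul_eq_mul]
    _ = ENNReal.ofReal (r ^ finrank ℝ E) * ∫⁻ z, f (c + r • R z) := by
        rw [← R.measurePreserving.lintegral_comp hfc]
    _ = ∫⁻ z, f (c + r • R z) * ENNReal.ofReal (r ^ finrank ℝ E) := by
        rw [← lintegral_const_mul _ (by fun_prop)]
        simp only [mul_comm]

theorem measurable_inversion (c : E) (R : ℝ) : Measurable (EuclideanGeometry.inversion c R) := by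
  unfold EuclideanGeometry.inversion
  simp only [vsub_eq_sub, vadd_eq_add]
  fun_prop

theorem lintegral_eq_lintegral_inversion [Nontrivial E] (c : E) {R : ℝ} (hR : R ≠ 0)
    (f : E → ℝ≥0∞) :
    ∫⁻ z, f z = ∫⁻ z, f (EuclideanGeometry.inversion c R z) *
      ENNReal.ofReal ((R / dist z c) ^ (2 * finrank ℝ E)) := by
  have himage : EuclideanGeometry.inversion c R '' {c}ᶜ = {c}ᶜ := by
    rw [(EuclideanGeometry.inversion_involutive c hR).image_eq_preimage_symm]
    ext z
    simp [EuclideanGeometry.inversion_eq_center hR]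
  have hms : MeasurableSet ({c}ᶜ : Set E) := (measurableSet_singleton c).compl
  have hpunctured (g : E → ℝ≥0∞) : ∫⁻ z, g z = ∫⁻ z in {c}ᶜ, g z := by
    rw [restrict_compl_singleton]
  have hdet (z : E) : ENNReal.ofReal |(((R / dist z c) ^ 2 •
      ((ℝ ∙ (z - c))ᗮ.reflection : E →L[ℝ] E))).det| =
        ENNReal.ofReal ((R / dist z c) ^ (2 * finrank ℝ E)) := by
    have : (((R / dist z c) ^ 2 • ((ℝ ∙ (z - c))ᗮ.reflection : E →L[ℝ] E))).det =
        ((R / dist z c) ^ 2) ^ finrank ℝ E *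
          LinearMap.det ((ℝ ∙ (z - c))ᗮ.reflection).toLinearMap := LinearMap.det_smul _ _
    rw [this, Submodule.det_reflection, abs_mul, abs_neg_one_pow, mul_one, ← pow_mul,
      abs_of_nonneg ((even_two_mul _).pow_nonneg _)]
  calc ∫⁻ z, f z = ∫⁻ z in EuclideanGeometry.inversion c R '' {c}ᶜ, f z := by
        rw [himage, hpunctured]
    _ = ∫⁻ z in {c}ᶜ, _ := lintegral_image_eq_lintegral_abs_det_fderiv_mul volume hms
        (fun z hz => (EuclideanGeometry.hasFDerivAt_inversion hz).hasFDerivWithinAt)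
        (EuclideanGeometry.inversion_injective c hR).injOn f
    _ = _ := by
        rw [hpunctured]
        exact setLIntegral_congr_fun hms fun z _ => by rw [hdet, mul_comm]

/-- The radial function `t ↦ t ^ (-d) * min t t⁻¹ ^ δ` on `(0, ∞)`, integrable on a space of
dimension `d`. -/
noncomputable def criticalMajorant (d δ t : ℝ) : ℝ :=
  Real.exp (-(d * Real.log t) - δ * |Real.log t|)

theorem criticalMajorant_of_le_one {d δ t : ℝ} (ht : 0 < t) (ht' : t ≤ 1) :
    criticalMajorant d δ t = t ^ (δ - d) := by
  rw [criticalMajorant, abs_of_nonpos (Real.log_nonpos ht.le ht'), Real.rpow_def_of_pos ht]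
  ring_nf

theorem criticalMajorant_of_one_le {d δ t : ℝ} (ht : 1 ≤ t) :
    criticalMajorant d δ t = t ^ (-δ - d) := by
  rw [criticalMajorant, abs_of_nonneg (Real.log_nonneg ht),
    Real.rpow_def_of_pos (one_pos.trans_le ht)]
  ring_nf

theorem measurable_criticalMajorant (d δ : ℝ) : Measurable (criticalMajorant d δ) := by
  unfold criticalMajorant
  fun_prop

theorem lintegral_criticalMajorant_norm_lt_top [Nontrivial E] {δ : ℝ} (hδ : 0 < δ) :
    ∫⁻ z : E, ENNReal.ofReal (criticalMajorant (finrank ℝ E) δ ‖z‖) < ⊤ := by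
  set d := finrank ℝ E
  have hd : ((d - 1 : ℕ) : ℝ) = d - 1 := Nat.cast_pred finrank_pos
  have hradial {t β : ℝ} (ht : 0 < t) : t ^ (d - 1) • t ^ (β - d) = t ^ (β - 1) := by
    rw [smul_eq_mul, ← Real.rpow_natCast, ← Real.rpow_add ht, hd]
    ring_nf
  have hint : Integrable fun z : E => criticalMajorant d δ ‖z‖ := by
    rw [integrable_fun_norm_addHaar, ← Set.Ioc_union_Ioi_eq_Ioi (zero_le_one' ℝ)]
    refine IntegrableOn.union ?_ ?_
    · have hnear : IntegrableOn (fun t : ℝ => t ^ (δ - 1)) (Set.Ioc 0 1) :=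
        (intervalIntegrable_iff_integrableOn_Ioc_of_le zero_le_one).1
          (intervalIntegral.intervalIntegrable_rpow' (by linarith))
      refine hnear.congr_fun (fun t ht => ?_) measurableSet_Ioc
      simp only [criticalMajorant_of_le_one ht.1 ht.2, hradial ht.1, d]
    · have hfar : IntegrableOn (fun t : ℝ => t ^ (-δ - 1)) (Set.Ioi 1) :=
        integrableOn_Ioi_rpow_of_lt (by linarith) one_pos
      refine hfar.congr_fun (fun t ht => ?_) measurableSet_Ioi
      have ht : 1 < t := ht
      simp only [criticalMajorant_of_one_le ht.le, hradial (one_pos.trans ht), d]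
  exact hint.lintegral_lt_top

end EuclideanIntegrals

section DyadicShell

variable {E : Type*} [NormedAddCommGroup E]

variable (E) in
/-- A fundamental domain for multiplication by powers of `2` on nonzero vectors. -/
def dyadicShell : Set E := {z | 1 ≤ ‖z‖ ∧ ‖z‖ < 2}

theorem measurableSet_dyadicShell [MeasurableSpace E] [OpensMeasurableSpace E] :
    MeasurableSet (dyadicShell E) :=
  (measurableSet_le measurable_const measurable_norm).inter
    (measurableSet_lt measurable_norm measurable_const)

theorem measurable_indicator_dyadicShell [MeasurableSpace E] [OpensMeasurableSpace E] :
    Measurable ((dyadicShell E).indicator (1 : E → ℝ≥0∞)) :=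
  measurable_one.indicator measurableSet_dyadicShell

theorem zpow_smul_mem_dyadicShell_iff [NormedSpace ℝ E] {z : E} (hz : z ≠ 0) (n : ℤ) :
    (2 : ℝ) ^ n • z ∈ dyadicShell E ↔ n = -Int.log 2 ‖z‖ := by
  have hz' : 0 < ‖z‖ := norm_pos_iff.2 hz
  have hn : (0 : ℝ) < 2 ^ n := by positivity
  have hlower : 1 ≤ 2 ^ n * ‖z‖ ↔ -n ≤ Int.log 2 ‖z‖ := by
    rw [← Int.zpow_le_iff_le_log one_lt_two hz', Nat.cast_ofNat, zpow_neg,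
      inv_le_iff_one_le_mul₀' hn]
  have hupper : 2 ^ n * ‖z‖ < 2 ↔ Int.log 2 ‖z‖ < -n + 1 := by
    rw [← Int.lt_zpow_iff_log_lt one_lt_two hz', Nat.cast_ofNat, zpow_add₀ two_ne_zero, zpow_neg,
      zpow_one, inv_mul_eq_div, lt_div_iff₀' hn]
  have hnorm : ‖(2 : ℝ) ^ n • z‖ = 2 ^ n * ‖z‖ := by rw [norm_smul, Real.norm_of_nonneg hn.le]
  rw [dyadicShell, Set.mem_ofPred_eq, hnorm, hlower, hupper]
  omega

theorem tsum_indicator_dyadicShell [NormedSpace ℝ E] {z : E} (hz : z ≠ 0) :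
    ∑' n : ℤ, (dyadicShell E).indicator (1 : E → ℝ≥0∞) ((2 : ℝ) ^ n • z) = 1 := by
  rw [tsum_eq_single (-Int.log 2 ‖z‖) fun n hn =>
    Set.indicator_of_notMem (mt (zpow_smul_mem_dyadicShell_iff hz n).1 hn) _]
  exact Set.indicator_of_mem ((zpow_smul_mem_dyadicShell_iff hz _).2 rfl) _

variable [MeasurableSpace E] (μ : Measure E)

theorem measure_dyadicShell_pos [NormedSpace ℝ E] [Nontrivial E] [μ.IsOpenPosMeasure] :
    0 < μ (dyadicShell E) := by
  obtain ⟨z, hz⟩ := exists_norm_eq E (show (0 : ℝ) ≤ 3 / 2 by norm_num)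
  have hopen : IsOpen {w : E | 1 < ‖w‖ ∧ ‖w‖ < 2} :=
    (isOpen_lt continuous_const continuous_norm).inter (isOpen_lt continuous_norm continuous_const)
  have hpos := hopen.measure_pos μ ⟨z, by norm_num [hz]⟩
  exact hpos.trans_le (measure_mono fun w hw => ⟨hw.1.le, hw.2⟩)

theorem measure_dyadicShell_lt_top [ProperSpace E] [IsFiniteMeasureOnCompacts μ] :
    μ (dyadicShell E) < ⊤ :=
  (measure_mono fun _ hw => mem_ball_zero_iff.2 hw.2).trans_lt
    (measure_ball_lt_top (x := (0 : E)) (r := 2))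

theorem setLIntegral_dyadicShell_rpow_ne_zero [OpensMeasurableSpace E] [NormedSpace ℝ E]
    [Nontrivial E] [μ.IsOpenPosMeasure] (β : ℝ) :
    ∫⁻ z in dyadicShell E, ENNReal.ofReal (‖z‖ ^ β) ∂μ ≠ 0 := by
  have hsupport :
      dyadicShell E ⊆ support fun z => ENNReal.ofReal (‖z‖ ^ β) := fun z hz =>
    (ENNReal.ofReal_pos.2 (Real.rpow_pos_of_pos (one_pos.trans_le hz.1) β)).ne'
  rw [← pos_iff_ne_zero, setLIntegral_pos_iff (by fun_prop), Set.inter_eq_right.2 hsupport]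
  exact measure_dyadicShell_pos μ

theorem setLIntegral_dyadicShell_rpow_ne_top [ProperSpace E] [IsFiniteMeasureOnCompacts μ] {β : ℝ}
    (hβ : β ≤ 0) : ∫⁻ z in dyadicShell E, ENNReal.ofReal (‖z‖ ^ β) ∂μ ≠ ⊤ := by
  refine ((setLIntegral_mono measurable_one fun z hz => ?_).trans_lt
    (by simpa using measure_dyadicShell_lt_top μ)).ne
  exact ENNReal.ofReal_le_one.2 (Real.rpow_le_one_of_one_le_of_nonpos hz.1 hβ)

end DyadicShell

section LogEnergy

variable {V X : Type*} [MetricSpace X]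

/-- The energy `∑ s u w log |x u - x w|` of the configuration `x` of the points in `A`. Each
unordered pair is counted twice, so the product of propagators `|x u - x w| ^ (-2 s u w)` over
unordered pairs is `exp (-logEnergy s A x)`. -/
noncomputable def logEnergy (s : V → V → ℝ) (A : Finset V) (x : V → X) : ℝ :=
  ∑ u ∈ A, ∑ w ∈ A, s u w * Real.log (dist (x u) (x w))

variable {s : V → V → ℝ} {A : Finset V} {x : V → X}

theorem logEnergy_congr {y : V → X} (h : ∀ u ∈ A, x u = y u) : logEnergy s A x = logEnergy s A y :=
  sum_congr rfl fun u hu => sum_congr rfl fun w hw => by rw [h u hu, h w hw]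

theorem logEnergy_eq_of_dist_eq_mul (hdiag : ∀ u, s u u = 0) (hx : Set.InjOn x A) {y : V → X}
    {r : ℝ} (hr : 0 < r) (hy : ∀ u w, dist (y u) (y w) = r * dist (x u) (x w)) :
    logEnergy s A y = (∑ u ∈ A, ∑ w ∈ A, s u w) * Real.log r + logEnergy s A x := by
  simp only [logEnergy, sum_mul, ← sum_add_distrib]
  refine sum_congr rfl fun u hu => sum_congr rfl fun w hw => ?_
  by_cases huw : u = w
  · simp [huw, hdiag]
  · rw [hy, Real.log_mul hr.ne' (dist_ne_zero.2 (hx.ne hu hw huw)), mul_add]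

theorem logEnergy_insert [DecidableEq V] (hsymm : ∀ u w, s u w = s w u) {a : V} (ha : a ∉ A) :
    logEnergy s (insert a A) x =
      2 * ∑ u ∈ A, s u a * Real.log (dist (x u) (x a)) + logEnergy s A x := by
  simp only [logEnergy, sum_insert ha, dist_self, Real.log_zero, mul_zero, zero_add,
    sum_add_distrib, hsymm a, dist_comm (x a)]
  ring

theorem logEnergy_inversion {W P : Type*} [NormedAddCommGroup W] [InnerProductSpace ℝ W]
    [MetricSpace P] [NormedAddTorsor W P] (hsymm : ∀ u w, s u w = s w u)
    (hdiag : ∀ u, s u u = 0) {x : V → P} (hx : Set.InjOn x A) {c : P} (hc : ∀ u ∈ A, x u ≠ c) :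
    logEnergy s A (EuclideanGeometry.inversion c 1 ∘ x) =
      logEnergy s A x - 2 * ∑ u ∈ A, (∑ w ∈ A, s u w) * Real.log (dist (x u) c) := by
  have hterm : ∀ u ∈ A, ∀ w ∈ A, s u w * Real.log
      (dist (EuclideanGeometry.inversion c 1 (x u)) (EuclideanGeometry.inversion c 1 (x w))) =
        s u w * Real.log (dist (x u) (x w)) - s u w * Real.log (dist (x u) c) -
          s w u * Real.log (dist (x w) c) := by
    intro u hu w hw
    by_cases huw : u = w
    · simp [huw, hdiag]
    have hu' := dist_ne_zero.2 (hc u hu)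
    have hw' := dist_ne_zero.2 (hc w hw)
    rw [EuclideanGeometry.dist_inversion_inversion (hc u hu) (hc w hw),
      Real.log_mul (by positivity) (dist_ne_zero.2 (hx.ne hu hw huw)),
      Real.log_div (by norm_num) (mul_ne_zero hu' hw'), Real.log_mul hu' hw', hsymm w u]
    norm_num
    ring
  calc logEnergy s A (EuclideanGeometry.inversion c 1 ∘ x)
      = ∑ u ∈ A, ∑ w ∈ A, (s u w * Real.log (dist (x u) (x w)) -
          s u w * Real.log (dist (x u) c) - s w u * Real.log (dist (x w) c)) :=
        sum_congr rfl fun u hu => sum_congr rfl fun w hw => hterm u hu w hw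
    _ = _ := by
        simp only [sum_sub_distrib, sum_mul, logEnergy]
        rw [sum_comm (f := fun u w => s w u * Real.log (dist (x w) c))]
        ring

end LogEnergy

section CompletedWeight

variable {V : Type*} [Fintype V] [DecidableEq V]

/-- Half-weights of a completed vacuum graph in dimension `d`: if the propagator of the edge `uw`
is `|x u - x w| ^ (-2 λ ν u w)` then `s u w = λ ν u w`, which makes every weighted degree equal
to `d`. -/
structure IsCompletedWeight (s : V → V → ℝ) (d : ℝ) : Prop where
  symm : ∀ u w, s u w = s w u
  diag : ∀ u, s u u = 0
  nonneg : ∀ u w, 0 ≤ s u w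
  sum_eq : ∀ u, ∑ w, s u w = d

theorem sum_sum_Ico_comp_le {s : V → V → ℝ} {d ε : ℝ} {v : V}
    (hgap : ∀ A : Finset V, 2 ≤ #A → 2 ≤ #Aᶜ → ∑ u ∈ A, ∑ w ∈ A, s u w ≤ d * (#A - 1 : ℝ) - ε)
    {N : ℕ} {σ : ℕ → V} (hσ : Set.InjOn σ (range N)) (hv : ∀ i < N, σ i ≠ v) (m n : ℕ)
    (hmn : m + 1 < n) (hn : n ≤ N) (hproper : 0 < m ∨ n < N) :
    ∑ i ∈ Ico m n, ∑ j ∈ Ico m n, s (σ i) (σ j) ≤ d * (n - m - 1 : ℝ) - ε := by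
  have hIco : Ico m n ⊆ range N := fun k hk => mem_range.2 ((mem_Ico.1 hk).2.trans_le hn)
  have hinj : Set.InjOn σ (Ico m n) := hσ.mono (coe_subset.2 hIco)
  have hcard : #((Ico m n).image σ) = n - m := by rw [card_image_of_injOn hinj, Nat.card_Ico]
  have hv_mem : v ∈ ((Ico m n).image σ)ᶜ := by
    rw [mem_compl, mem_image]
    exact fun ⟨i, hi, hiv⟩ => hv i (mem_range.1 (hIco hi)) hiv
  obtain ⟨k, hkN, hk⟩ : ∃ k < N, k ∉ Ico m n := by
    rcases hproper with h | h
    · exact ⟨0, by omega, by grind⟩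
    · exact ⟨n, h, by simp⟩
  have hk_mem : σ k ∈ ((Ico m n).image σ)ᶜ := by
    rw [mem_compl, mem_image]
    exact fun ⟨i, hi, hik⟩ => hk (hσ (hIco hi) (mem_coe.2 (mem_range.2 hkN)) hik ▸ hi)
  have := hgap _ (by omega) (one_lt_card.2 ⟨v, hv_mem, σ k, hk_mem, (hv k hkN).symm⟩)
  rw [hcard, Nat.cast_sub (by omega)] at this
  simpa only [sum_image hinj] using this

namespace IsCompletedWeight

variable {s : V → V → ℝ} {d : ℝ}

theorem sum_sum_eq_sub_cut (hs : IsCompletedWeight s d) (A : Finset V) :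
    ∑ u ∈ A, ∑ w ∈ A, s u w = d * #A - ∑ u ∈ A, ∑ w ∈ Aᶜ, s u w := by
  rw [eq_sub_iff_add_eq, ← sum_add_distrib]
  simp only [sum_add_sum_compl, hs.sum_eq, sum_const, nsmul_eq_mul, mul_comm]

theorem sum_sum_erase (hs : IsCompletedWeight s d) (v : V) :
    ∑ u ∈ univ.erase v, ∑ w ∈ univ.erase v, s u w = d * (#(univ.erase v) - 1 : ℝ) := by
  have hv : ∑ u ∈ univ.erase v, s u v = d := by
    rw [sum_erase _ (f := fun u => s u v) (hs.diag v), ← hs.sum_eq v]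
    exact sum_congr rfl fun u _ => hs.symm u v
  rw [hs.sum_sum_eq_sub_cut, ← compl_singleton, compl_compl, compl_singleton]
  simp only [sum_singleton, hv]
  ring

/-- Only finitely many cuts occur, so the strict inequalities of primitivity hold with a uniform
margin. -/
theorem exists_uniform_gap (hs : IsCompletedWeight s d)
    (hprim : ∀ A : Finset V, 2 ≤ #A → 2 ≤ #Aᶜ → d < ∑ u ∈ A, ∑ w ∈ Aᶜ, s u w) :
    ∃ ε > 0, ∀ A : Finset V, 2 ≤ #A → 2 ≤ #Aᶜ →
      ∑ u ∈ A, ∑ w ∈ A, s u w ≤ d * (#A - 1 : ℝ) - ε := by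
  let cuts : Finset (Finset V) := {A | 2 ≤ #A ∧ 2 ≤ #Aᶜ}
  have hcuts : ∀ A ∈ cuts, 0 < ∑ u ∈ A, ∑ w ∈ Aᶜ, s u w - d := fun A hA =>
    sub_pos.2 (hprim A (mem_filter.1 hA).2.1 (mem_filter.1 hA).2.2)
  obtain ⟨ε, hε, hle⟩ : ∃ ε > 0, ∀ A ∈ cuts, ε ≤ ∑ u ∈ A, ∑ w ∈ Aᶜ, s u w - d := by
    rcases cuts.eq_empty_or_nonempty with h | h
    · exact ⟨1, one_pos, by simp [h]⟩
    · obtain ⟨A, hA, hmin⟩ := cuts.exists_min_image (fun A => ∑ u ∈ A, ∑ w ∈ Aᶜ, s u w - d) h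
      exact ⟨_, hcuts A hA, hmin⟩
  refine ⟨ε, hε, fun A h h' => ?_⟩
  have := hle A (mem_filter.2 ⟨mem_univ A, h, h'⟩)
  rw [hs.sum_sum_eq_sub_cut]
  linarith

theorem exists_parent_le_logEnergy {X : Type*} [MetricSpace X] {ε : ℝ}
    (hs : IsCompletedWeight s d) (hε : 0 ≤ ε)
    (hgap : ∀ A : Finset V, 2 ≤ #A → 2 ≤ #Aᶜ → ∑ u ∈ A, ∑ w ∈ A, s u w ≤ d * (#A - 1 : ℝ) - ε)
    {v a b : V} (hva : v ≠ a) (hb : b ∈ ({v, a}ᶜ : Finset V)) {x : V → X}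
    (hx : Set.InjOn x (univ.erase v))
    (hb₁ : 1 ≤ dist (x b) (x a)) (hb₂ : dist (x b) (x a) ≤ 2) :
    ∃ (parent : V → V) (rank : V → ℕ), (∀ u ∈ ({v, a}ᶜ : Finset V), rank (parent u) < rank u) ∧
      d * ∑ u ∈ {v, a}ᶜ, Real.log (dist (x u) (x (parent u))) +
        ε / (#(univ.erase v) - 1) * ∑ u ∈ {v, a}ᶜ, |Real.log (dist (x u) (x (parent u)))| -
          ε * Real.log (2 * #(univ.erase v)) ≤ logEnergy s (univ.erase v) x := by
  obtain ⟨σ, q, rfl, hprim⟩ := IsPrimPrefix.exists_of_mem (fun u w => dist (x u) (x w))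
    (mem_erase.2 ⟨hva.symm, mem_univ a⟩)
  set N := #(univ.erase v)
  have hIco (m : ℕ) : Set.InjOn σ (Ico m N) :=
    hprim.injOn.mono fun k hk => mem_coe.2 (mem_range.2 (mem_Ico.1 hk).2)
  have hU : univ.erase v = (Ico 0 N).image σ := by rw [← range_eq_Ico, hprim.image_eq]
  have hS : ({v, σ 0}ᶜ : Finset V) = (Ico 1 N).image σ := by
    rw [hprim.image_Ico_one_eq ⟨σ 0, mem_erase.2 ⟨hva.symm, mem_univ _⟩⟩]
    ext
    grind [mem_compl]
  have hrank {k : ℕ} (hk : k < N) : invFunOn σ (range N) (σ k) = k :=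
    hprim.injOn.leftInvOn_invFunOn (mem_coe.2 (mem_range.2 hk))
  refine ⟨fun u => σ (q (invFunOn σ (range N) u)), invFunOn σ (range N), fun u hu => ?_, ?_⟩
  · obtain ⟨k, hk, rfl⟩ := mem_image.1 (hS ▸ hu)
    obtain ⟨hk0, hkN⟩ := mem_Ico.1 hk
    have := hprim.parent_lt k hk0 hkN
    simpa only [hrank hkN, hrank (this.trans hkN)]
  obtain ⟨j, hj, rfl⟩ := mem_image.1 (hS ▸ hb)
  have htotal := hs.sum_sum_erase v
  simp only [hU, sum_image (hIco _)] at htotal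
  rw [← hU] at htotal
  have hdist_pos : ∀ i < N, ∀ j < N, i ≠ j → 0 < dist (x (σ i)) (x (σ j)) := fun i hi j hj hij =>
    dist_pos.2 (hx.ne (hprim.mem i hi) (hprim.mem j hj) (hprim.injOn.ne (by simpa) (by simpa) hij))
  have key := mul_sum_log_dist_parent_add_le (y := fun i => x (σ i)) (s := fun i j => s (σ i) (σ j))
    (fun i j => hs.nonneg _ _) (fun i => hs.diag _)
    (sum_sum_Ico_comp_le hgap hprim.injOn fun i hi => ne_of_mem_erase (hprim.mem i hi)) htotal hε
    hdist_pos hprim.parent_lt (fun i k j => hprim.parent_le_of_le) hj hb₁ hb₂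
  have hparent (f : ℝ → ℝ) : ∑ u ∈ {v, σ 0}ᶜ,
      f (dist (x u) (x (σ (q (invFunOn σ (range N) u))))) =
        ∑ k ∈ Ico 1 N, f (dist (x (σ k)) (x (σ (q k)))) := by
    rw [hS, sum_image (hIco _)]
    exact sum_congr rfl fun k hk => by rw [hrank (mem_Ico.1 hk).2]
  rw [hparent Real.log, hparent (|Real.log ·|), logEnergy, hU]
  simpa only [sum_image (hIco _)] using key

theorem logEnergy_inversion_eq {E : Type*} [NormedAddCommGroup E] [InnerProductSpace ℝ E]
    (hs : IsCompletedWeight s d) {v a : V} (hva : v ≠ a) {x : V → E} (ha : x a = 0) (hv : x v = 0)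
    (hx : Set.InjOn x (univ.erase v)) :
    logEnergy s (univ.erase v) (EuclideanGeometry.inversion 0 1 ∘ x) =
      logEnergy s (univ.erase a) x - 2 * d * ∑ u ∈ {v, a}ᶜ, Real.log ‖x u‖ := by
  have hmem {u : V} : u ∈ ({v, a}ᶜ : Finset V) ↔ u ≠ v ∧ u ≠ a := by simp
  have herase_v : univ.erase v = insert a {v, a}ᶜ := by ext; grind
  have herase_a : univ.erase a = insert v {v, a}ᶜ := by ext; grind
  rw [herase_v] at hx
  have hne : ∀ u ∈ ({v, a}ᶜ : Finset V), x u ≠ 0 := fun u hu =>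
    ha ▸ hx.ne (mem_insert_of_mem hu) (mem_insert_self a _) (hmem.1 hu).2
  have hnorm (z : E) : ‖EuclideanGeometry.inversion 0 1 z‖ = ‖z‖⁻¹ := by
    simpa using EuclideanGeometry.dist_inversion_center (0 : E) z 1
  have hdegree (u : V) : ∑ w ∈ {v, a}ᶜ, s u w = d - s u v - s u a := by
    rw [← hs.sum_eq u, ← sum_add_sum_compl {v, a} (s u), sum_pair hva]
    ring
  rw [herase_v, herase_a, logEnergy_insert hs.symm (by simp), logEnergy_insert hs.symm (by simp),
    logEnergy_inversion hs.symm hs.diag (hx.mono (by simp)) hne]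
  simp only [Function.comp_apply, ha, hv, EuclideanGeometry.inversion_self, dist_zero_right, hnorm,
    Real.log_inv, hdegree, sub_mul, sum_sub_distrib, ← mul_sum, mul_neg, sum_neg_distrib]
  ring

end IsCompletedWeight

end CompletedWeight

theorem eq_of_swap_of_replace {V α : Type*} {f : V → V → V → α}
    (swap₁₂ : ∀ v a b, v ≠ a → v ≠ b → a ≠ b → f v a b = f a v b)
    (swap₂₃ : ∀ v a b, v ≠ a → v ≠ b → a ≠ b → f v a b = f v b a)
    (replace₃ : ∀ v a b c, v ≠ a → v ≠ b → a ≠ b → v ≠ c → a ≠ c → f v a b = f v a c)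
    {v a b v' a' b' : V} (hva : v ≠ a) (hvb : v ≠ b) (hab : a ≠ b) (hva' : v' ≠ a')
    (hvb' : v' ≠ b') (hab' : a' ≠ b') : f v a b = f v' a' b' := by
  have same_first {v a b a' b' : V} (hva : v ≠ a) (hvb : v ≠ b) (hab : a ≠ b) (hva' : v ≠ a')
      (hvb' : v ≠ b') (hab' : a' ≠ b') : f v a b = f v a' b' := by
    by_cases h : a' = b
    · subst h
      rw [swap₂₃ v a a' hva hvb hab, replace₃ v a' a b' hvb hva hab.symm hvb' hab']
    · rw [swap₂₃ v a b hva hvb hab, replace₃ v b a a' hvb hva hab.symm hva' (Ne.symm h),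
        swap₂₃ v b a' hvb hva' (Ne.symm h), replace₃ v a' b b' hva' hvb h hvb' hab']
  by_cases h : v = v'
  · subst h
    exact same_first hva hvb hab hva' hvb' hab'
  · obtain ⟨x, hvx, hvx'⟩ : ∃ x, v ≠ x ∧ v' ≠ x := by
      by_cases h' : v' = a
      · exact ⟨b, hvb, h' ▸ hab⟩
      · exact ⟨a, hva, h'⟩
    rw [same_first hva hvb hab h hvx hvx', swap₁₂ v v' x h hvx hvx',
      same_first (Ne.symm h) hvx' hvx hva' hvb' hab']

section Periods

open Module

variable {V E : Type*} [Fintype V] [DecidableEq V] [NormedAddCommGroup E] {s : V → V → ℝ}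
  {v a b : V}

/-- The Feynman integrand of the decompletion at `v`, written in exponential form. It is the
product of the propagators where the vertices other than `v` are at distinct points, hence almost
everywhere. -/
noncomputable def decompletionIntegrand (s : V → V → ℝ) (v : V) (x : V → E) : ℝ≥0∞ :=
  ENNReal.ofReal (Real.exp (-logEnergy s (univ.erase v) x))

theorem decompletionIntegrand_congr {x y : V → E} (h : ∀ u, u ≠ v → x u = y u) :
    decompletionIntegrand s v x = decompletionIntegrand s v y := by
  rw [decompletionIntegrand, logEnergy_congr fun u hu => h u (ne_of_mem_erase hu),
    decompletionIntegrand]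

theorem injOn_erase_sdiff_compl_triple {X : Type*} {x : V → X} (hx : x a ≠ x b) :
    Set.InjOn x (univ.erase v \ {v, a, b}ᶜ : Finset V) := by
  intro u hu w hw huw
  grind [mem_compl]

namespace IsCompletedWeight

theorem exists_parent_decompletionIntegrand_le {d ε : ℝ} (hs : IsCompletedWeight s d) (hε : 0 ≤ ε)
    (hgap : ∀ A : Finset V, 2 ≤ #A → 2 ≤ #Aᶜ → ∑ u ∈ A, ∑ w ∈ A, s u w ≤ d * (#A - 1 : ℝ) - ε)
    (hva : v ≠ a) (hb : b ∈ ({v, a}ᶜ : Finset V)) {x : V → E} (hx : Set.InjOn x (univ.erase v))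
    (hb₁ : 1 ≤ dist (x b) (x a)) (hb₂ : dist (x b) (x a) ≤ 2) :
    ∃ (parent : V → V) (rank : V → ℕ), (∀ u ∈ ({v, a}ᶜ : Finset V), rank (parent u) < rank u) ∧
      decompletionIntegrand s v x ≤ ENNReal.ofReal (Real.exp (ε * Real.log (2 * #(univ.erase v)))) *
        ∏ u ∈ {v, a}ᶜ, ENNReal.ofReal
          (criticalMajorant d (ε / (#(univ.erase v) - 1)) ‖x u - x (parent u)‖) := by
  obtain ⟨parent, rank, hrank, hle⟩ := hs.exists_parent_le_logEnergy hε hgap hva hb hx hb₁ hb₂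
  refine ⟨parent, rank, hrank, ?_⟩
  simp only [criticalMajorant, ← dist_eq_norm]
  rw [← ENNReal.ofReal_prod_of_nonneg fun _ _ => (Real.exp_pos _).le,
    ← ENNReal.ofReal_mul (Real.exp_pos _).le, ← Real.exp_sum, ← Real.exp_add]
  refine ENNReal.ofReal_le_ofReal (Real.exp_le_exp.2 ?_)
  rw [sum_sub_distrib, sum_neg_distrib, ← mul_sum, ← mul_sum]
  linarith

theorem decompletionIntegrand_inversion_mul_prod [InnerProductSpace ℝ E] {n : ℕ}
    (hs : IsCompletedWeight s n) (hva : v ≠ a) (hvb : v ≠ b) (hab : a ≠ b) {x : V → E}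
    (ha : x a = 0) (hv : x v = 0) (hb : ‖x b‖ = 1) (hx : Set.InjOn x (univ.erase v)) :
    decompletionIntegrand s v (EuclideanGeometry.inversion 0 1 ∘ x) * ∏ u ∈ {v, a, b}ᶜ,
        ENNReal.ofReal ((1 / dist (x u) 0) ^ (2 * n)) =
      decompletionIntegrand s a x := by
  have hcompl : ({v, a}ᶜ : Finset V) = insert b {v, a, b}ᶜ := by ext; grind [mem_compl]
  have hjacobian : ∀ u ∈ ({v, a, b}ᶜ : Finset V), (1 / dist (x u) 0) ^ (2 * n) =
      Real.exp (-(2 * n * Real.log ‖x u‖)) := fun u hu => by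
    obtain ⟨huv, hua, -⟩ : u ≠ v ∧ u ≠ a ∧ u ≠ b := by simpa using hu
    have hu0 : 0 < ‖x u‖ := norm_pos_iff.2 <|
      ha ▸ hx.ne (mem_erase.2 ⟨huv, mem_univ u⟩) (mem_erase.2 ⟨hva.symm, mem_univ a⟩) hua
    rw [dist_zero_right, ← Real.exp_log (pow_pos (one_div_pos.2 hu0) _), Real.log_pow, one_div,
      Real.log_inv]
    push_cast
    ring_nf
  rw [← ENNReal.ofReal_prod_of_nonneg fun _ _ => by positivity, prod_congr rfl hjacobian,
    ← Real.exp_sum, decompletionIntegrand, decompletionIntegrand,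
    ← ENNReal.ofReal_mul (by positivity), ← Real.exp_add,
    hs.logEnergy_inversion_eq hva ha hv hx, hcompl, sum_insert (by simp), hb, Real.log_one,
    sum_neg_distrib, ← mul_sum]
  ring_nf

end IsCompletedWeight

variable [InnerProductSpace ℝ E] [FiniteDimensional ℝ E] [MeasurableSpace E] [BorelSpace E]

theorem measurable_decompletionIntegrand :
    Measurable (decompletionIntegrand s v : (V → E) → ℝ≥0∞) := by
  unfold decompletionIntegrand logEnergy
  fun_prop

/-- The Feynman period, without its powers of `π`, of the decompletion at `v`, with the vertices
`a` and `b` fixed at the points `p` and `q`. -/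
noncomputable def period (s : V → V → ℝ) (v a b : V) (p q : E) : ℝ≥0∞ :=
  lmarginal (fun _ => volume) {v, a, b}ᶜ (decompletionIntegrand s v) (update (fun _ => p) b q)

theorem lmarginal_decompletionIntegrand_eq_period (x : V → E) :
    lmarginal (fun _ => volume) {v, a, b}ᶜ (decompletionIntegrand s v) x =
      period s v a b (x a) (x b) := by
  refine lintegral_congr fun y => decompletionIntegrand_congr fun u hu => ?_
  grind [updateFinset, update_apply, mem_compl]

namespace IsCompletedWeight

theorem lmarginal_similarity (hs : IsCompletedWeight s (finrank ℝ E)) (v : V) {r : ℝ} (hr : 0 < r)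
    (c : E) (R : E ≃ₗᵢ[ℝ] E) [Nontrivial E] (S : Finset V) {g : (V → E) → ℝ≥0∞} (hg : Measurable g)
    {x : V → E} (hx : Set.InjOn x (univ.erase v \ S : Finset V)) :
    lmarginal (fun _ => volume) S (fun z => decompletionIntegrand s v z * g z)
        ((fun p => c + r • R p) ∘ x) =
      ENNReal.ofReal (r ^ (finrank ℝ E * (#S + 1 - #(univ.erase v) : ℝ))) *
        lmarginal (fun _ => volume) S
          (fun z => decompletionIntegrand s v z * g ((fun p => c + r • R p) ∘ z)) x := by
  set T : E → E := fun p => c + r • R p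
  have hT : Measurable T := by fun_prop
  have hTcomp : Measurable fun z : V → E => T ∘ z :=
    measurable_pi_lambda _ fun u => hT.comp (measurable_pi_apply u)
  have hdist (p q : E) : dist (T p) (T q) = r * dist p q := by
    rw [dist_add_left, dist_smul₀, R.dist_map, Real.norm_of_nonneg hr.le]
  have hscale {z : V → E} (hz : Set.InjOn z (univ.erase v)) :
      decompletionIntegrand s v (T ∘ z) * ∏ _u ∈ S, ENNReal.ofReal (r ^ finrank ℝ E) =
        ENNReal.ofReal (r ^ (finrank ℝ E * (#S + 1 - #(univ.erase v) : ℝ))) *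
          decompletionIntegrand s v z := by
    rw [prod_const, ← ENNReal.ofReal_pow (by positivity), decompletionIntegrand,
      decompletionIntegrand, ← ENNReal.ofReal_mul (by positivity),
      ← ENNReal.ofReal_mul (by positivity),
      logEnergy_eq_of_dist_eq_mul (y := T ∘ z) hs.diag hz hr fun u w => hdist (z u) (z w),
      hs.sum_sum_erase,
      ← Real.rpow_natCast, ← Real.rpow_natCast, ← Real.rpow_mul hr.le, Real.rpow_def_of_pos hr,
      Real.rpow_def_of_pos hr, ← Real.exp_add, ← Real.exp_add]
    ring_nf
  rw [lmarginal_comp_of_change_of_variables hT measurable_const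
    (fun f hf => lintegral_eq_lintegral_similarity hr c R hf) S
    (f := fun z => decompletionIntegrand s v z * g z) (measurable_decompletionIntegrand.mul hg) x]
  calc lmarginal (fun _ => volume) S (fun z => decompletionIntegrand s v (T ∘ z) * g (T ∘ z) *
          ∏ _u ∈ S, ENNReal.ofReal (r ^ finrank ℝ E)) x
      = lmarginal (fun _ => volume) S (fun z =>
          ENNReal.ofReal (r ^ (finrank ℝ E * (#S + 1 - #(univ.erase v) : ℝ))) *
            (decompletionIntegrand s v z * g (T ∘ z))) x :=
        lmarginal_congr_of_separated fun z hzx hsep => by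
          rw [mul_right_comm, hscale (injOn_of_separated hx hzx hsep), mul_assoc]
    _ = _ := lintegral_const_mul _ (((measurable_decompletionIntegrand.mul
          (hg.comp hTcomp))).comp measurable_updateFinset)

theorem period_eq_mul_period [Nontrivial E] (hs : IsCompletedWeight s (finrank ℝ E)) (hva : v ≠ a)
    (hvb : v ≠ b) (hab : a ≠ b) {p q e : E} (hpq : p ≠ q) (he : ‖e‖ = 1) :
    period s v a b p q =
      ENNReal.ofReal (dist p q ^ (-finrank ℝ E : ℝ)) * period s v a b 0 e := by
  have hr : 0 < ‖q - p‖ := norm_pos_iff.2 (sub_ne_zero.2 hpq.symm)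
  obtain ⟨R, hR⟩ : ∃ R : E ≃ₗᵢ[ℝ] E, R e = ‖q - p‖⁻¹ • (q - p) :=
    ⟨_, Submodule.reflection_sub (by rw [norm_smul, norm_inv, norm_norm, he,
      inv_mul_cancel₀ hr.ne'])⟩
  have hx : update (fun _ : V => (0 : E)) b e a ≠ update (fun _ : V => (0 : E)) b e b := by
    rw [update_of_ne hab, update_self]
    exact (norm_pos_iff.1 (he ▸ one_pos)).symm
  have hexp : (#({v, a, b}ᶜ : Finset V) + 1 - #(univ.erase v) : ℝ) = -1 := by
    have : univ.erase v = insert a (insert b {v, a, b}ᶜ) := by ext; grind [mem_compl]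
    rw [this, card_insert_of_notMem (by simp [hab]), card_insert_of_notMem (by simp)]
    push_cast
    ring
  have := hs.lmarginal_similarity v hr p R {v, a, b}ᶜ measurable_one
    (injOn_erase_sdiff_compl_triple hx)
  simp only [Pi.one_apply, mul_one, hexp, mul_neg_one,
    lmarginal_decompletionIntegrand_eq_period, Function.comp_apply, update_self,
    update_of_ne hab, map_zero, smul_zero, add_zero, hR, smul_inv_smul₀ hr.ne',
    add_sub_cancel] at this
  rw [this, dist_comm, dist_eq_norm]

theorem period_swap_fixed [Nontrivial E] (hs : IsCompletedWeight s (finrank ℝ E)) (hva : v ≠ a)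
    (hvb : v ≠ b) (hab : a ≠ b) {e : E} (he : ‖e‖ = 1) :
    period s v a b 0 e = period s v b a 0 e := by
  have hbase := lmarginal_decompletionIntegrand_eq_period (s := s) (v := v) (a := b) (b := a)
    (update (fun _ => (0 : E)) b e)
  rw [pair_comm, update_self, update_of_ne hab] at hbase
  rw [period, hbase, hs.period_eq_mul_period hvb hva hab.symm (norm_pos_iff.1 (he ▸ one_pos)) he,
    dist_zero_right, he, Real.one_rpow, ENNReal.ofReal_one, one_mul]

theorem period_swap_completion [Nontrivial E] (hs : IsCompletedWeight s (finrank ℝ E)) (hva : v ≠ a)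
    (hvb : v ≠ b) (hab : a ≠ b) {e : E} (he : ‖e‖ = 1) :
    period s v a b 0 e = period s a v b 0 e := by
  set inv : E → E := EuclideanGeometry.inversion 0 1
  set x : V → E := update (fun _ => 0) b e
  have hxa : x a = 0 := update_of_ne hab _ _
  have hxv : x v = 0 := update_of_ne hvb _ _
  have hxb : x b = e := update_self _ _ _
  have hfixed : inv ∘ x = x := by
    have hinv : inv e = e := EuclideanGeometry.inversion_of_mem_sphere (by simpa using he)
    rw [comp_update, hinv]
    exact congrArg (update (β := fun _ => E) · b e)
      (funext fun _ => EuclideanGeometry.inversion_self _ _)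
  have hne : x a ≠ x b := by
    rw [hxa, hxb]
    exact (norm_pos_iff.1 (he ▸ one_pos)).symm
  have hpointwise (z : V → E) (hzx : ∀ u ∉ ({v, a, b}ᶜ : Finset V), z u = x u)
      (hsep : ∀ u ∈ ({v, a, b}ᶜ : Finset V), ∀ w, w ≠ u → z u ≠ z w) :
      decompletionIntegrand s v (inv ∘ z) * ∏ u ∈ {v, a, b}ᶜ,
          ENNReal.ofReal ((1 / dist (z u) 0) ^ (2 * finrank ℝ E)) =
        decompletionIntegrand s a z :=
    hs.decompletionIntegrand_inversion_mul_prod hva hvb hab ((hzx a (by simp)).trans hxa)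
      ((hzx v (by simp)).trans hxv) (by rw [hzx b (by simp), hxb, he])
      (injOn_of_separated (injOn_erase_sdiff_compl_triple hne) hzx hsep)
  calc period s v a b 0 e
      = lmarginal (fun _ => volume) {v, a, b}ᶜ (fun z => decompletionIntegrand s v (inv ∘ z) *
          ∏ u ∈ {v, a, b}ᶜ, ENNReal.ofReal ((1 / dist (z u) 0) ^ (2 * finrank ℝ E))) x := by
        rw [period, ← lmarginal_comp_of_change_of_variables
          (measurable_inversion 0 1) (by fun_prop)
          (fun f _ => lintegral_eq_lintegral_inversion 0 one_ne_zero f) _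
          measurable_decompletionIntegrand, hfixed]
    _ = lmarginal (fun _ => volume) {v, a, b}ᶜ (decompletionIntegrand s a) x :=
        lmarginal_congr_of_separated hpointwise
    _ = period s a v b 0 e := by rw [insert_comm, period]

end IsCompletedWeight

/-- The period integral with `a` at the origin and `b` ranging over a dyadic shell. It is a
multiple of `period` which, by scale invariance, does not depend on `b`. -/
noncomputable def shellPeriod (E : Type*) [NormedAddCommGroup E] [InnerProductSpace ℝ E]
    [FiniteDimensional ℝ E] [MeasurableSpace E] [BorelSpace E] (s : V → V → ℝ) (v a b : V) : ℝ≥0∞ :=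
  lmarginal (fun _ => volume) {v, a}ᶜ
    (fun x => decompletionIntegrand s v x * (dyadicShell E).indicator 1 (x b)) 0

theorem injOn_erase_sdiff_compl_pair {X : Type*} (x : V → X) :
    Set.InjOn x (univ.erase v \ {v, a}ᶜ : Finset V) := by
  intro u hu w hw _
  grind [mem_compl]

theorem shellPeriod_eq_tsum [Nontrivial E] {c : V} (hc : c ∈ ({v, a}ᶜ : Finset V)) :
    shellPeriod E s v a b = ∑' n : ℤ, lmarginal (fun _ => volume) {v, a}ᶜ
      (fun x => decompletionIntegrand s v x * ((dyadicShell E).indicator 1 (x b) *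
        (dyadicShell E).indicator 1 ((2 : ℝ) ^ n • x c))) 0 := by
  have hmeas (n : ℤ) : Measurable fun x : V → E =>
      decompletionIntegrand s v x * ((dyadicShell E).indicator 1 (x b) *
        (dyadicShell E).indicator (1 : E → ℝ≥0∞) ((2 : ℝ) ^ n • x c)) :=
    measurable_decompletionIntegrand.mul
      ((measurable_indicator_dyadicShell.comp (measurable_pi_apply b)).mul
        (measurable_indicator_dyadicShell.comp ((measurable_pi_apply c).const_smul _)))
  calc shellPeriod E s v a b
      = lmarginal (fun _ => volume) {v, a}ᶜ (fun x => ∑' n : ℤ, decompletionIntegrand s v x *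
          ((dyadicShell E).indicator 1 (x b) *
            (dyadicShell E).indicator 1 ((2 : ℝ) ^ n • x c))) 0 :=
        lmarginal_congr_of_separated fun z hz hsep => by
          have hzc : z c ≠ 0 := fun h =>
            hsep c hc a (by grind [mem_compl]) (h.trans (hz a (by simp)).symm)
          rw [ENNReal.tsum_mul_left, ENNReal.tsum_mul_left, tsum_indicator_dyadicShell hzc, mul_one]
    _ = _ := lintegral_tsum fun n => ((hmeas n).comp measurable_updateFinset).aemeasurable

namespace IsCompletedWeight

theorem shellPeriod_eq_mul_period [Nontrivial E] (hs : IsCompletedWeight s (finrank ℝ E))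
    (hva : v ≠ a) (hvb : v ≠ b) (hab : a ≠ b) {e : E} (he : ‖e‖ = 1) :
    shellPeriod E s v a b =
      (∫⁻ w in dyadicShell E, ENNReal.ofReal (‖w‖ ^ (-finrank ℝ E : ℝ))) * period s v a b 0 e := by
  have hcompl : ({v, a}ᶜ : Finset V) = insert b {v, a, b}ᶜ := by ext; grind [mem_compl]
  have hmeas : Measurable fun x : V → E =>
      decompletionIntegrand s v x * (dyadicShell E).indicator 1 (x b) :=
    measurable_decompletionIntegrand.mul
      (measurable_indicator_dyadicShell.comp (measurable_pi_apply b))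
  have hfiber (w : E) : lmarginal (fun _ => volume) {v, a, b}ᶜ
      (fun x => decompletionIntegrand s v x * (dyadicShell E).indicator 1 (x b)) (update 0 b w) =
        (dyadicShell E).indicator
          (fun w => ENNReal.ofReal (‖w‖ ^ (-finrank ℝ E : ℝ)) * period s v a b 0 e) w := by
    rw [lmarginal_mul_of_eq_off measurable_decompletionIntegrand fun z hz => by
      rw [hz b (by simp)], lmarginal_decompletionIntegrand_eq_period, update_self,
      update_of_ne hab]
    by_cases hw : w ∈ dyadicShell E
    · have hw0 : (0 : E) ≠ w := (norm_pos_iff.1 (one_pos.trans_le hw.1)).symm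
      rw [Set.indicator_of_mem hw, Set.indicator_of_mem hw, Pi.one_apply, mul_one, Pi.zero_apply,
        hs.period_eq_mul_period hva hvb hab hw0 he, dist_zero_left]
    · rw [Set.indicator_of_notMem hw, Set.indicator_of_notMem hw, mul_zero]
  rw [shellPeriod, hcompl, lmarginal_insert _ hmeas (by simp), lintegral_congr hfiber,
    lintegral_indicator measurableSet_dyadicShell, lintegral_mul_const _ (by fun_prop)]

theorem shellPeriod_eq_of_mem [Nontrivial E] (hs : IsCompletedWeight s (finrank ℝ E))
    (hva : v ≠ a) {c : V} (hb : b ∈ ({v, a}ᶜ : Finset V)) (hc : c ∈ ({v, a}ᶜ : Finset V)) :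
    shellPeriod E s v a b = shellPeriod E s v a c := by
  have hexp : (#({v, a}ᶜ : Finset V) + 1 - #(univ.erase v) : ℝ) = 0 := by
    have : univ.erase v = insert a {v, a}ᶜ := by ext; grind [mem_compl]
    rw [this, card_insert_of_notMem (by simp)]
    push_cast
    ring
  rw [shellPeriod_eq_tsum hc, shellPeriod_eq_tsum hb, ← (Equiv.neg ℤ).tsum_eq]
  refine tsum_congr fun n => ?_
  have hg : Measurable fun z : V → E => (dyadicShell E).indicator (1 : E → ℝ≥0∞) (z b) *
      (dyadicShell E).indicator 1 ((2 : ℝ) ^ (-n) • z c) :=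
    (measurable_indicator_dyadicShell.comp (measurable_pi_apply b)).mul
      (measurable_indicator_dyadicShell.comp ((measurable_pi_apply c).const_smul _))
  have hscale := hs.lmarginal_similarity v (zpow_pos two_pos n) 0 (LinearIsometryEquiv.refl ℝ E)
    {v, a}ᶜ hg (injOn_erase_sdiff_compl_pair 0)
  have hzero : (fun p : E => 0 + (2 : ℝ) ^ n • LinearIsometryEquiv.refl ℝ E p) ∘ (0 : V → E) = 0 :=
    funext fun _ => by simp
  have hcancel (p : E) : (2 : ℝ) ^ (-n) • (2 : ℝ) ^ n • p = p := by
    rw [zpow_neg, inv_smul_smul₀ (zpow_ne_zero n two_ne_zero)]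
  rw [hzero, hexp, mul_zero, Real.rpow_zero, ENNReal.ofReal_one, one_mul] at hscale
  simp only [Function.comp_apply, zero_add, LinearIsometryEquiv.coe_refl, id, hcancel] at hscale
  refine hscale.trans (congrArg (lmarginal _ _ · 0) (funext fun z => ?_))
  rw [mul_comm (Set.indicator _ _ _)]

theorem shellPeriod_lt_top [Nontrivial E] (hs : IsCompletedWeight s (finrank ℝ E))
    (hprim : ∀ A : Finset V, 2 ≤ #A → 2 ≤ #Aᶜ → finrank ℝ E < ∑ u ∈ A, ∑ w ∈ Aᶜ, s u w)
    (hva : v ≠ a) (hb : b ∈ ({v, a}ᶜ : Finset V)) : shellPeriod E s v a b < ⊤ := by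
  classical
  obtain ⟨ε, hε, hgap⟩ := hs.exists_uniform_gap hprim
  set N := #(univ.erase v)
  have hN : (1 : ℝ) < N := by
    exact_mod_cast one_lt_card.2 ⟨a, by simp [hva.symm], b, by grind [mem_compl]⟩
  set g : E → ℝ≥0∞ := fun z => ENNReal.ofReal (criticalMajorant (finrank ℝ E) (ε / (N - 1)) ‖z‖)
  have hg : Measurable g :=
    ((measurable_criticalMajorant _ _).comp measurable_norm).ennreal_ofReal
  have hg_lt_top : ∫⁻ z, g z < ⊤ :=
    lintegral_criticalMajorant_norm_lt_top (div_pos hε (sub_pos.2 hN))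
  let forests : Finset (V → V) :=
    {p | ∃ rank : V → ℕ, ∀ u ∈ ({v, a}ᶜ : Finset V), rank (p u) < rank u}
  refine lt_of_le_of_lt (lmarginal_mono_of_separated fun z hz hsep => ?_)
    (lmarginal_sum_prod_sub_parent_lt_top hg hg_lt_top ENNReal.ofReal_ne_top
      (C := ENNReal.ofReal (Real.exp (ε * Real.log (2 * N)))) (forests := forests)
      (fun p hp => (mem_filter.1 hp).2) 0)
  by_cases hzb : z b ∈ dyadicShell E
  · have hza : z a = 0 := hz a (by simp)
    have hdist : dist (z b) (z a) = ‖z b‖ := by rw [hza, dist_zero_right]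
    rw [Set.indicator_of_mem hzb, Pi.one_apply, mul_one]
    obtain ⟨p, rank, hrank, hle⟩ := hs.exists_parent_decompletionIntegrand_le hε.le hgap hva hb
      (injOn_of_separated (injOn_erase_sdiff_compl_pair 0) hz hsep)
      (hdist ▸ hzb.1) (hdist ▸ hzb.2.le)
    refine hle.trans ?_
    exact single_le_sum_of_canonicallyOrdered (f := fun p : V → V => _ * ∏ u ∈ {v, a}ᶜ,
      g (z u - z (p u))) (mem_filter.2 ⟨mem_univ p, rank, hrank⟩)
  · rw [Set.indicator_of_notMem hzb, mul_zero]
    exact zero_le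

theorem period_lt_top [Nontrivial E] (hs : IsCompletedWeight s (finrank ℝ E))
    (hprim : ∀ A : Finset V, 2 ≤ #A → 2 ≤ #Aᶜ → finrank ℝ E < ∑ u ∈ A, ∑ w ∈ Aᶜ, s u w)
    (hva : v ≠ a) (hvb : v ≠ b) (hab : a ≠ b) {e : E} (he : ‖e‖ = 1) :
    period s v a b 0 e < ⊤ := by
  have hlt := hs.shellPeriod_lt_top (E := E) hprim hva (b := b) (by grind [mem_compl])
  rw [hs.shellPeriod_eq_mul_period hva hvb hab he] at hlt
  exact ENNReal.lt_top_of_mul_ne_top_right hlt.ne (setLIntegral_dyadicShell_rpow_ne_zero _ _)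

theorem period_change_fixed [Nontrivial E] (hs : IsCompletedWeight s (finrank ℝ E)) (hva : v ≠ a)
    (hvb : v ≠ b) (hab : a ≠ b) {c : V} (hvc : v ≠ c) (hac : a ≠ c) {e : E} (he : ‖e‖ = 1) :
    period s v a b 0 e = period s v a c 0 e := by
  have hshell := hs.shellPeriod_eq_of_mem (E := E) hva (b := b) (c := c) (by grind [mem_compl])
    (by grind [mem_compl])
  rw [hs.shellPeriod_eq_mul_period hva hvb hab he, hs.shellPeriod_eq_mul_period hva hvc hac he]
    at hshell
  exact (ENNReal.mul_right_inj (setLIntegral_dyadicShell_rpow_ne_zero _ _)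
    (setLIntegral_dyadicShell_rpow_ne_top _ (by simp))).1 hshell

end IsCompletedWeight

theorem IsCompletedWeight.exists_period_eq [Nontrivial E]
    (hs : IsCompletedWeight s (finrank ℝ E))
    (hprim : ∀ A : Finset V, 2 ≤ #A → 2 ≤ #Aᶜ → finrank ℝ E < ∑ u ∈ A, ∑ w ∈ Aᶜ, s u w) :
    ∃ c : ℝ≥0∞, c ≠ ⊤ ∧ ∀ v a b, v ≠ a → v ≠ b → a ≠ b → ∀ e : E, ‖e‖ = 1 →
      period s v a b 0 e = c := by
  obtain ⟨e₀, he₀⟩ := exists_norm_eq E zero_le_one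
  have hunit {v a b : V} (hva : v ≠ a) (hvb : v ≠ b) (hab : a ≠ b) {e : E} (he : ‖e‖ = 1) :
      period s v a b 0 e = period s v a b 0 e₀ := by
    rw [hs.period_eq_mul_period hva hvb hab (norm_pos_iff.1 (he ▸ one_pos)).symm he₀,
      dist_zero_left, he, Real.one_rpow, ENNReal.ofReal_one, one_mul]
  by_cases h : ∃ v a b : V, v ≠ a ∧ v ≠ b ∧ a ≠ b
  · obtain ⟨v₀, a₀, b₀, hva₀, hvb₀, hab₀⟩ := h
    refine ⟨period s v₀ a₀ b₀ 0 e₀, (hs.period_lt_top hprim hva₀ hvb₀ hab₀ he₀).ne,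
      fun v a b hva hvb hab e he => (hunit hva hvb hab he).trans ?_⟩
    exact eq_of_swap_of_replace (f := fun v a b => period s v a b 0 e₀)
      (fun _ _ _ hva hvb hab => hs.period_swap_completion hva hvb hab he₀)
      (fun _ _ _ hva hvb hab => hs.period_swap_fixed hva hvb hab he₀)
      (fun _ _ _ _ hva hvb hab hvc hac => hs.period_change_fixed hva hvb hab hvc hac he₀)
      hva hvb hab hva₀ hvb₀ hab₀
  · exact ⟨0, ENNReal.zero_ne_top, fun v a b hva hvb hab => absurd ⟨v, a, b, hva, hvb, hab⟩ h⟩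

end Periods

section Graph

open Module

variable {V E : Type*} [Fintype V] {G : SimpleGraph V} {ν : V → V → ℝ} {lam : ℝ} {v a b : V}

theorem isCompletedWeight_const_mul {d : ℝ} (hlam : 0 < lam) (hsym : ∀ u w, ν u w = ν w u)
    (hedge : ∀ u w, G.Adj u w → 0 ≤ ν u w) (hnonedge : ∀ u w, ¬G.Adj u w → ν u w = 0)
    (hdeg : ∀ u, ∑ w, ν u w = d / lam) : IsCompletedWeight (fun u w => lam * ν u w) d where
  symm u w := by rw [hsym]
  diag u := by rw [hnonedge u u G.irrefl, mul_zero]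
  nonneg u w := by
    by_cases h : G.Adj u w
    · exact mul_nonneg hlam.le (hedge u w h)
    · rw [hnonedge u w h, mul_zero]
  sum_eq u := by rw [← mul_sum, hdeg, mul_div_cancel₀ _ hlam.ne']

variable [DecidableEq V] [DecidableRel G.Adj]

theorem prod_edgeFinset_notMem_eq_prod_prod {M : Type*} [CommMonoid M] {f : Sym2 V → M}
    {g : V → V → M} (hf : ∀ u w, G.Adj u w → u ≠ v → w ≠ v → f s(u, w) = g u w * g w u)
    (hg : ∀ u w, ¬G.Adj u w → g u w = 1) :
    ∏ ed ∈ G.edgeFinset with v ∉ ed, f ed =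
      ∏ u ∈ univ.erase v, ∏ w ∈ univ.erase v, g u w := by
  set U := univ.erase v
  have hmaps (p : V × V) (hp : p ∈ (U ×ˢ U).filter fun p => G.Adj p.1 p.2) :
      s(p.1, p.2) ∈ G.edgeFinset.filter (v ∉ ·) := by
    simpa [U, and_comm, eq_comm] using hp
  rw [← prod_product', ← prod_filter_of_ne (p := fun p : V × V => G.Adj p.1 p.2) fun p _ hp =>
    not_imp_comm.1 (hg p.1 p.2) hp, ← prod_fiberwise_of_maps_to hmaps]
  refine prod_congr rfl fun ed hed => ?_
  induction ed with
  | _ u w =>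
    obtain ⟨hadj, hvu, hvw⟩ : G.Adj u w ∧ v ≠ u ∧ v ≠ w := by simpa using hed
    have hfiber : {p ∈ {p ∈ U ×ˢ U | G.Adj p.1 p.2} | s(p.1, p.2) = s(u, w)} =
        {(u, w), (w, u)} := by
      ext ⟨u', w'⟩
      have := hadj.symm
      simp only [U, mem_filter, mem_product, mem_erase, mem_univ, mem_insert, mem_singleton,
        Prod.mk.injEq, Sym2.eq_iff]
      grind
    rw [hf u w hadj hvu.symm hvw.symm, hfiber, prod_pair (by simp [hadj.ne])]

variable [NormedAddCommGroup E]

/-- The Feynman integrand of the decompletion of `G` at `v`: the product of the propagators of the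
edges which avoid `v`. The weight of an edge `uw` is written `(ν u w + ν w u) / 2` to make the
expression symmetric. -/
noncomputable def edgeIntegrand (G : SimpleGraph V) [DecidableRel G.Adj] (ν : V → V → ℝ)
    (lam : ℝ) (v : V) (x : V → E) : ℝ :=
  ∏ ed ∈ G.edgeFinset.filter (fun ed => v ∉ ed),
    Sym2.lift ⟨fun u w => ‖x u - x w‖ ^ (-(lam * (ν u w + ν w u))),
      fun u w => by dsimp only; rw [norm_sub_rev, add_comm (ν u w)]⟩ ed

/-- The configuration with the vertex `a` at the origin, `b` at `e` and the other vertices of the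
decompletion at `v` placed by `y`; the value at the deleted vertex `v` is irrelevant. -/
noncomputable def placement (v a b : V) (e : E) (y : {u : V // u ≠ v ∧ u ≠ a ∧ u ≠ b} → E) :
    V → E :=
  fun u => if u = a then 0 else if u = b then e
    else if h : u ≠ v ∧ u ≠ a ∧ u ≠ b then y ⟨u, h⟩ else 0

theorem edgeIntegrand_nonneg (x : V → E) : 0 ≤ edgeIntegrand G ν lam v x := by
  refine prod_nonneg fun ed _ => ?_
  induction ed with
  | _ u w => exact Real.rpow_nonneg (norm_nonneg _) _

theorem ofReal_edgeIntegrand (hnonedge : ∀ u w, ¬G.Adj u w → ν u w = 0) {x : V → E}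
    (hx : Set.InjOn x (univ.erase v)) :
    ENNReal.ofReal (edgeIntegrand G ν lam v x) =
      decompletionIntegrand (fun u w => lam * ν u w) v x := by
  have hexp : Real.exp (-logEnergy (fun u w => lam * ν u w) (univ.erase v) x) =
      ∏ u ∈ univ.erase v, ∏ w ∈ univ.erase v,
        Real.exp (-(lam * ν u w * Real.log (dist (x u) (x w)))) := by
    simp only [logEnergy, ← sum_neg_distrib, Real.exp_sum]
  rw [edgeIntegrand, decompletionIntegrand, hexp]
  congr 1
  refine prod_edgeFinset_notMem_eq_prod_prod (fun u w huw hu hw => ?_) fun u w huw => by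
    simp [hnonedge u w huw]
  have hne : x u ≠ x w := hx.ne (by simpa using hu) (by simpa using hw) huw.ne
  simp only [Sym2.lift_mk]
  rw [← Real.exp_add, ← dist_eq_norm, Real.rpow_def_of_pos (dist_pos.2 hne),
    dist_comm (x w)]
  ring_nf

variable [MeasurableSpace E]

omit [Fintype V] in
theorem measurable_placement (e : E) : Measurable (placement v a b e) := by
  refine measurable_pi_lambda _ fun u => ?_
  unfold placement
  split_ifs <;> fun_prop

variable [BorelSpace E]

theorem measurable_edgeIntegrand [SecondCountableTopology E] :
    Measurable (edgeIntegrand G ν lam v : (V → E) → ℝ) := by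
  refine Finset.measurable_prod _ fun ed _ => ?_
  induction ed with
  | _ u w =>
    simp only [Sym2.lift_mk]
    fun_prop

theorem lintegral_edgeIntegrand_placement [InnerProductSpace ℝ E]
    [FiniteDimensional ℝ E] [Nontrivial E] (hnonedge : ∀ u w, ¬G.Adj u w → ν u w = 0) (hab : a ≠ b)
    {e : E} (he : e ≠ 0) :
    ∫⁻ y, ENNReal.ofReal (edgeIntegrand G ν lam v (placement v a b e y)) =
      period (fun u w => lam * ν u w) v a b 0 e := by
  set x : V → E := update (fun _ => 0) b e
  have hx : x a ≠ x b := by simpa [x, update_of_ne hab] using he.symm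
  have hplacement (y : {u : V // u ≠ v ∧ u ≠ a ∧ u ≠ b} → E) : placement v a b e y =
      fun u => if h : u ≠ v ∧ u ≠ a ∧ u ≠ b then y ⟨u, h⟩ else x u := by
    ext u
    grind [placement, update_apply]
  calc ∫⁻ y, ENNReal.ofReal (edgeIntegrand G ν lam v (placement v a b e y))
      = lmarginal (fun _ => volume) {v, a, b}ᶜ
          (fun z => ENNReal.ofReal (edgeIntegrand G ν lam v z)) x := by
        rw [lmarginal_eq_lintegral_subtype (p := fun u => u ≠ v ∧ u ≠ a ∧ u ≠ b) fun u => by simp]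
        exact lintegral_congr fun y => by rw [hplacement]
    _ = period (fun u w => lam * ν u w) v a b 0 e :=
        lmarginal_congr_of_separated fun z hzx hsep =>
          ofReal_edgeIntegrand hnonedge
            (injOn_of_separated (injOn_erase_sdiff_compl_triple hx) hzx hsep)

end Graph

end FeynmanPeriod

open FeynmanPeriod Module in
theorem decompletions_of_primitive_have_same_period_general {E V : Type*} [NormedAddCommGroup E]
    [InnerProductSpace ℝ E] [FiniteDimensional ℝ E] [Nontrivial E] [MeasurableSpace E]
    [BorelSpace E] [Fintype V] [DecidableEq V] (G : SimpleGraph V) [DecidableRel G.Adj]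
    {lam : ℝ} (hlam : 0 < lam) (ν : V → V → ℝ) (hsym : ∀ u w, ν u w = ν w u)
    (hedge : ∀ u w, G.Adj u w → 0 ≤ ν u w) (hnonedge : ∀ u w, ¬G.Adj u w → ν u w = 0)
    (hdeg : ∀ u : V, ∑ w : V, ν u w = finrank ℝ E / lam)
    (hprim : ∀ S : Finset V, 2 ≤ S.card → 2 ≤ Sᶜ.card →
      finrank ℝ E / lam < ∑ u ∈ S, ∑ w ∈ Sᶜ, ν u w) :
    ∃ c : ℝ, ∀ v a b : V, v ≠ a → v ≠ b → a ≠ b → ∀ e : E, ‖e‖ = 1 →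
      Integrable (fun y => edgeIntegrand G ν lam v (placement v a b e y)) ∧
        ∫ y, edgeIntegrand G ν lam v (placement v a b e y) = c := by
  have hs := isCompletedWeight_const_mul hlam hsym hedge hnonedge hdeg
  obtain ⟨c, hc, hperiod⟩ := hs.exists_period_eq fun A hA hA' => by
    simpa only [div_lt_iff₀' hlam, Finset.mul_sum] using hprim A hA hA'
  refine ⟨c.toReal, fun v a b hva hvb hab e he => ?_⟩
  have hlintegral := (lintegral_edgeIntegrand_placement hnonedge hab (norm_pos_iff.1
    (he ▸ one_pos))).trans (hperiod v a b hva hvb hab e he)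
  have hnonneg (y) : 0 ≤ edgeIntegrand G ν lam v (placement v a b e y) := edgeIntegrand_nonneg _
  have hmeas : Measurable fun y => edgeIntegrand G ν lam v (placement v a b e y) :=
    measurable_edgeIntegrand.comp (measurable_placement e)
  constructor
  · rw [← lintegral_ofReal_ne_top_iff_integrable hmeas.aestronglyMeasurable (.of_forall hnonneg)]
    exact hlintegral.trans_ne hc
  · rw [integral_eq_lintegral_of_nonneg_ae (.of_forall hnonneg) hmeas.aestronglyMeasurable,
      hlintegral]

/-- Every decompletion of a completed primitive graph, with any two of the
remaining vertices placed at `0` and at a unit vector, has the same finite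
Feynman period. -/
theorem decompletions_of_primitive_have_same_period
    (D : ℕ) (hD : 3 ≤ D) (V : Type) [Fintype V] [DecidableEq V]
    (hV : 4 ≤ Fintype.card V)
    (G : SimpleGraph V) [DecidableRel G.Adj]
    (ν : V → V → ℝ) (hsym : ∀ u w, ν u w = ν w u)
    (hedge : ∀ u w, G.Adj u w → 0 < ν u w)
    (hnonedge : ∀ u w, ¬G.Adj u w → ν u w = 0)
    (hdeg : ∀ u : V, ∑ w : V, ν u w = (D : ℝ) / (((D : ℝ) - 2) / 2))
    (hprim : ∀ S : Finset V, 2 ≤ S.card → 2 ≤ Sᶜ.card →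
      (D : ℝ) / (((D : ℝ) - 2) / 2) < ∑ u ∈ S, ∑ w ∈ Sᶜ, ν u w) :
    let lam : ℝ := ((D : ℝ) - 2) / 2
    let F : ∀ (v a b : V), EuclideanSpace ℝ (Fin D) →
        ({u : V // u ≠ v ∧ u ≠ a ∧ u ≠ b} → EuclideanSpace ℝ (Fin D)) → ℝ :=
      fun v a b e y =>
        ∏ ed ∈ G.edgeFinset.filter (fun ed => v ∉ ed),
          Sym2.lift ⟨fun u w =>
            ‖(if u = a then 0 else if u = b then e
                else if h : u ≠ v ∧ u ≠ a ∧ u ≠ b then y ⟨u, h⟩ else 0) -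
              (if w = a then 0 else if w = b then e
                else if h : w ≠ v ∧ w ≠ a ∧ w ≠ b then y ⟨w, h⟩ else 0)‖
              ^ (-(lam * (ν u w + ν w u))),
            fun u w => by dsimp only; rw [norm_sub_rev, add_comm (ν u w)]⟩ ed
    (∀ (v a b : V), v ≠ a → v ≠ b → a ≠ b →
      ∀ e : EuclideanSpace ℝ (Fin D), ‖e‖ = 1 → Integrable (F v a b e)) ∧
    ∃ c : ℝ, ∀ (v a b : V), v ≠ a → v ≠ b → a ≠ b →
      ∀ e : EuclideanSpace ℝ (Fin D), ‖e‖ = 1 →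
        Real.pi ^ (-((D : ℝ) * ((Fintype.card V - 3 : ℕ) : ℝ)) / 2) *
          (∫ y : {u : V // u ≠ v ∧ u ≠ a ∧ u ≠ b} → EuclideanSpace ℝ (Fin D),
            F v a b e y) = c := by
  have : Nonempty (Fin D) := ⟨⟨0, by omega⟩⟩
  have hlam : 0 < ((D : ℝ) - 2) / 2 := by
    have : (3 : ℝ) ≤ D := by exact_mod_cast hD
    linarith
  obtain ⟨c, hc⟩ := decompletions_of_primitive_have_same_period_general
    (E := EuclideanSpace ℝ (Fin D)) G hlam ν hsym (fun u w h => (hedge u w h).le) hnonedge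
    (by simpa only [finrank_euclideanSpace_fin] using hdeg)
    (by simpa only [finrank_euclideanSpace_fin] using hprim)
  exact ⟨fun v a b hva hvb hab e he => (hc v a b hva hvb hab e he).1,
    _, fun v a b hva hvb hab e he => congrArg (_ * ·) (hc v a b hva hvb hab e he).2⟩
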